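/- (Theorem 1: individual-delay-reflected consensus criterion.) Consider the multi-agent system of m ≥ 2 agents x_k : ℝ → ℝ^n with ẋ_k(t) = A x_k(t) + B u_k(t−τ_k(t)), u_k(t) = −Σ_{l≠k} a_{kl} K (x_k(t) − x_l(t)), where each delay τ_k : ℝ → ℝ is continuous with 0 ≤ τ_k^l ≤ τ_k(t) ≤ τ_k^u; equivalently, the stacked error state z(t) = (G⊗I_n)x(t) ∈ ℝ^F satisfies ż(t) = Ā z(t) − Σ_{k=1}^m B̄_k z(t−τ_k(t)). Suppose there exist, for each k = 1,…,m: symmetric positive definite matrices P_k ∈ ℝ^{3F×3F}, Q_{1k}, Q_{2k} ∈ ℝ^{F×F}, R_{1k}, R_{2k} ∈ ℝ^{2F×2F}, symmetric matrices W_{1k}, W_{2k}, W_{3k} ∈ ℝ^{F×F}, and arbitrary matrices Y_{ikj} ∈ ℝ^{(1+(3+3N)m)F×F} (i = 1,2,3; j = 1,…,2N+1), such that (a) R_{1k} + W̄_{1k} ≻ 0, R_{2k} + W̄_{2k} ≻ 0, R_{2k} + W̄_{3k} ≻ 0 for all k, and (b) for every choice of delay values (τ_1(t),…,τ_m(t))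 with each τ_k(t) ∈ {τ_k^l, τ_k^u} (i.e., at all 2^m vertices), the symmetric block matrix [[Π̄, X̄_1, X̄_{23}],[X̄_1ᵀ, −RW̄_1, 0],[X̄_{23}ᵀ, 0, −RW̄_{23}]] is negative definite, where Π̄, X̄_1, X̄_{23}, RW̄_1, RW̄_{23} are defined from A, B, K, L, the delay bounds, and the decision matrices by the explicit formulas in the context. Then the multi-agent system achieves consensus: for all agents i, j, x_i(t) − x_j(t) → 0 as t → ∞ (equivalently z(t) → 0). -/

import Mathlib

open Matrix Kronecker

/-! Formalization of Theorem 1 (individual-delay-reflected consensus criterion) for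
multi-agent systems with heterogeneous time-varying delays.

Notation: `m` agents with `n`-dimensional states, `F = n(m−1)`; the agent-difference
(error) state space `ℝ^F` is indexed by `ag m n = Fin (m-1) × Fin n`, the augmented space
`ℝ^{(1+(3+3N)m)F}` by `bg m n N`, and the `(2N+2)F`-dimensional column space of the block
matrices `Ȳ_{ik}`, `M̄_{xk}` (matching the block-diagonal structure of
`ℐ_N ⊗ (2F×2F matrix)`) by `kp m n N = Fin (N+1) × (ag m n ⊕ ag m n)`.
Paper blocks are 1-based: paper agent index `k ∈ {1,…,m}` is `(k : Fin m)` with paper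
value `(k:ℕ)+1`, and `eB f` is the paper's block selector `e_f`. -/

abbrev ag (m n : ℕ) := Fin (m - 1) × Fin n
abbrev bg (m n N : ℕ) := Fin (1 + (3 + 3 * N) * m) × ag m n
abbrev kp (m n N : ℕ) := Fin (N + 1) × (ag m n ⊕ ag m n)

/-- Block selector matrix `e_f ∈ ℝ^{(1+(3+3N)m)F × F}` (1-based block index `f`). -/
def eB (m n N : ℕ) (f : ℕ) : Matrix (bg m n N) (ag m n) ℝ := fun p j =>
  if (p.1 : ℕ) + 1 = f ∧ p.2 = j then 1 else 0

/-- `Sym(X) = X + Xᵀ`. -/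
def symM {α : Type*} (X : Matrix α α ℝ) : Matrix α α ℝ := X + Xᵀ

/-- Tree-type transformation matrix `G = [1_{m−1} | −I_{m−1}]`. -/
def Gm (m : ℕ) : Matrix (Fin (m - 1)) (Fin m) ℝ := fun i j =>
  if (j : ℕ) = 0 then 1 else if (j : ℕ) = (i : ℕ) + 1 then -1 else 0

/-- `U = [0_{m−1} | −I_{m−1}]ᵀ`. -/
def Um (m : ℕ) : Matrix (Fin m) (Fin (m - 1)) ℝ := fun i j =>
  if (i : ℕ) = (j : ℕ) + 1 then -1 else 0

/-- `E_k`: a single `1` at entry `(k,k)`. -/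
def Em (m : ℕ) (k : Fin m) : Matrix (Fin m) (Fin m) ℝ := fun i j =>
  if i = k ∧ j = k then 1 else 0

/-- Graph Laplacian built from the adjacency weights:
`l_{kl} = −a_{kl}` for `k ≠ l`, `l_{kk} = Σ_{l≠k} a_{kl}`. -/
def Lap (m : ℕ) (adj : Fin m → Fin m → ℝ) : Matrix (Fin m) (Fin m) ℝ := fun k l =>
  if k = l then ∑ l' ∈ Finset.univ.erase k, adj k l' else -(adj k l)

/-- `Ā = I_{m−1} ⊗ A`. -/
def Abar (m n : ℕ) (A : Matrix (Fin n) (Fin n) ℝ) : Matrix (ag m n) (ag m n) ℝ :=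
  (1 : Matrix (Fin (m - 1)) (Fin (m - 1)) ℝ) ⊗ₖ A

/-- `B̄_k = G E_k L U ⊗ (BK)`. -/
def Bbar (m n r : ℕ) (adj : Fin m → Fin m → ℝ) (B : Matrix (Fin n) (Fin r) ℝ)
    (K : Matrix (Fin r) (Fin n) ℝ) (k : Fin m) : Matrix (ag m n) (ag m n) ℝ :=
  (Gm m * Em m k * Lap m adj * Um m) ⊗ₖ (B * K)

/-- The row `e_1Āᵀ − Σ_{k'} e_{1+2m+k'} B̄_{k'}ᵀ` mapping `ζ(t)` to `ż(t)`. -/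
def dynRow (m n r N : ℕ) (A : Matrix (Fin n) (Fin n) ℝ) (adj : Fin m → Fin m → ℝ)
    (B : Matrix (Fin n) (Fin r) ℝ) (K : Matrix (Fin r) (Fin n) ℝ) :
    Matrix (bg m n N) (ag m n) ℝ :=
  eB m n N 1 * (Abar m n A)ᵀ
    - ∑ k : Fin m, eB m n N (2 * m + (k : ℕ) + 2) * (Bbar m n r adj B K k)ᵀ

/-- `Π_{1k} = [e_1, τ_k^l e_{1+3m+k}, (τ_k(t)−τ_k^l)e_{1+(3+N)m+k} + (τ_k^u−τ_k(t))e_{1+(3+2N)m+k}]`. -/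
def Pi1 (m n N : ℕ) (τl τu τv : Fin m → ℝ) (k : Fin m) :
    Matrix (bg m n N) (Fin 3 × ag m n) ℝ := fun p c =>
  if c.1 = 0 then eB m n N 1 p c.2
  else if c.1 = 1 then τl k * eB m n N (3 * m + (k : ℕ) + 2) p c.2
  else (τv k - τl k) * eB m n N ((3 + N) * m + (k : ℕ) + 2) p c.2
        + (τu k - τv k) * eB m n N ((3 + 2 * N) * m + (k : ℕ) + 2) p c.2

/-- `Π_{2k} = [e_1Āᵀ − Σ_{k'} e_{1+2m+k'}B̄_{k'}ᵀ, e_1 − e_{1+k}, e_{1+k} − e_{1+m+k}]`. -/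
def Pi2 (m n r N : ℕ) (A : Matrix (Fin n) (Fin n) ℝ) (adj : Fin m → Fin m → ℝ)
    (B : Matrix (Fin n) (Fin r) ℝ) (K : Matrix (Fin r) (Fin n) ℝ) (k : Fin m) :
    Matrix (bg m n N) (Fin 3 × ag m n) ℝ := fun p c =>
  if c.1 = 0 then dynRow m n r N A adj B K p c.2
  else if c.1 = 1 then (eB m n N 1 - eB m n N ((k : ℕ) + 2)) p c.2
  else (eB m n N ((k : ℕ) + 2) - eB m n N (m + (k : ℕ) + 2)) p c.2

/-- `Π_3 = [e_1Āᵀ − Σ_k e_{1+2m+k}B̄_kᵀ, e_1]`. -/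
def Pi3 (m n r N : ℕ) (A : Matrix (Fin n) (Fin n) ℝ) (adj : Fin m → Fin m → ℝ)
    (B : Matrix (Fin n) (Fin r) ℝ) (K : Matrix (Fin r) (Fin n) ℝ) :
    Matrix (bg m n N) (ag m n ⊕ ag m n) ℝ := fun p c =>
  Sum.elim (dynRow m n r N A adj B K p) (eB m n N 1 p) c

/-- `W̄ = [[0, W],[W, 0]] ∈ ℝ^{2F×2F}`. -/
def Wb (m n : ℕ) (W : Matrix (ag m n) (ag m n) ℝ) :
    Matrix (ag m n ⊕ ag m n) (ag m n ⊕ ag m n) ℝ := fun p q =>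
  match p, q with
  | Sum.inl i, Sum.inr j => W i j
  | Sum.inr i, Sum.inl j => W i j
  | _, _ => 0

/-- `γ_{ij} = (−1)^{j−1}(−1)^i C(j−1,i) C(j+i−1,i)`. -/
def gam (i j : ℕ) : ℝ :=
  (-1 : ℝ) ^ (j - 1) * ((-1 : ℝ) ^ i * ((j - 1).choose i : ℝ) * ((j + i - 1).choose i : ℝ))

/-- `ρ_i^{xk}` for `x = 1,2,3` (here `x : Fin 3`, 0-based). -/
def rho (m n N : ℕ) (x : Fin 3) (k : Fin m) (i : ℕ) : Matrix (bg m n N) (ag m n) ℝ :=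
  if x = 0 then
    (if i = 0 then eB m n N 1 - eB m n N ((k : ℕ) + 2)
     else eB m n N 1 - (i : ℝ) • eB m n N ((2 + i) * m + (k : ℕ) + 2))
  else if x = 1 then
    (if i = 0 then eB m n N ((k : ℕ) + 2) - eB m n N (2 * m + (k : ℕ) + 2)
     else eB m n N ((k : ℕ) + 2) - (i : ℝ) • eB m n N ((2 + i + N) * m + (k : ℕ) + 2))
  else
    (if i = 0 then eB m n N (2 * m + (k : ℕ) + 2) - eB m n N (m + (k : ℕ) + 2)
     else eB m n N (2 * m + (k : ℕ) + 2) - (i : ℝ) • eB m n N ((2 + i + 2 * N) * m + (k : ℕ) + 2))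

/-- The scalar coefficient of the even moment matrices:
`τ_k^l`, `τ_k(t)−τ_k^l`, `τ_k^u−τ_k(t)` for `x = 1,2,3`. -/
def coefM (m : ℕ) (τl τu τv : Fin m → ℝ) (x : Fin 3) (k : Fin m) : ℝ :=
  if x = 0 then τl k else if x = 1 then τv k - τl k else τu k - τv k

/-- Iterated-integral block selectors `e_{1+(3+i)m+k}`, `e_{1+(3+i+N)m+k}`, `e_{1+(3+i+2N)m+k}`. -/
def eEven (m n N : ℕ) (x : Fin 3) (k : Fin m) (i : ℕ) : Matrix (bg m n N) (ag m n) ℝ :=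
  if x = 0 then eB m n N ((3 + i) * m + (k : ℕ) + 2)
  else if x = 1 then eB m n N ((3 + i + N) * m + (k : ℕ) + 2)
  else eB m n N ((3 + i + 2 * N) * m + (k : ℕ) + 2)

/-- Odd moment matrix `M_{2j−1}^{xk} = Σ_{i=0}^{j−1} γ_{ij} ρ_i^{xk}`. -/
def Modd (m n N : ℕ) (x : Fin 3) (k : Fin m) (j : ℕ) : Matrix (bg m n N) (ag m n) ℝ :=
  ∑ i ∈ Finset.range j, gam i j • rho m n N x k i

/-- Even moment matrix `M_{2j}^{xk} = coef ⋅ Σ_{i=0}^{j−1} γ_{ij} e_{…}`. -/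
def Meven (m n N : ℕ) (τl τu τv : Fin m → ℝ) (x : Fin 3) (k : Fin m) (j : ℕ) :
    Matrix (bg m n N) (ag m n) ℝ :=
  coefM m τl τu τv x k • ∑ i ∈ Finset.range j, gam i j • eEven m n N x k i

/-- `M̄_{xk} = [M_1^{xk} ⋯ M_{2N+1}^{xk} 0]`, the `jb`-th `2F`-block holding the pair
`(M_{2jb+1}, M_{2jb+2})` (1-based positions), with the final even slot zero. -/
def Mb (m n N : ℕ) (τl τu τv : Fin m → ℝ) (x : Fin 3) (k : Fin m) :
    Matrix (bg m n N) (kp m n N) ℝ := fun p c =>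
  match c.2 with
  | Sum.inl jj => Modd m n N x k ((c.1 : ℕ) + 1) p jj
  | Sum.inr jj => if (c.1 : ℕ) < N then Meven m n N τl τu τv x k ((c.1 : ℕ) + 1) p jj else 0

/-- `Ȳ_{xk} = [Y_{xk1} ⋯ Y_{xk(2N+1)} 0]`, with the same `2F`-block interleaving. -/
def Yb (m n N : ℕ) (Y : Fin 3 → Fin m → Fin (2 * N + 1) → Matrix (bg m n N) (ag m n) ℝ)
    (x : Fin 3) (k : Fin m) : Matrix (bg m n N) (kp m n N) ℝ := fun p c =>
  match c.2 with
  | Sum.inl jj => Y x k ⟨2 * (c.1 : ℕ), by have := c.1.isLt; omega⟩ p jj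
  | Sum.inr jj =>
      if h : 2 * (c.1 : ℕ) + 1 < 2 * N + 1 then Y x k ⟨2 * (c.1 : ℕ) + 1, h⟩ p jj else 0

/-- `Π̄`: the `(1,1)`-block of the LMI of Theorem 1. -/
def PibarT (m n r N : ℕ) (A : Matrix (Fin n) (Fin n) ℝ) (adj : Fin m → Fin m → ℝ)
    (B : Matrix (Fin n) (Fin r) ℝ) (K : Matrix (Fin r) (Fin n) ℝ)
    (τl τu τv : Fin m → ℝ)
    (P : Fin m → Matrix (Fin 3 × ag m n) (Fin 3 × ag m n) ℝ)
    (Q1 Q2 : Fin m → Matrix (ag m n) (ag m n) ℝ)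
    (R1 R2 : Fin m → Matrix (ag m n ⊕ ag m n) (ag m n ⊕ ag m n) ℝ)
    (W1 W2 W3 : Fin m → Matrix (ag m n) (ag m n) ℝ)
    (Y : Fin 3 → Fin m → Fin (2 * N + 1) → Matrix (bg m n N) (ag m n) ℝ) :
    Matrix (bg m n N) (bg m n N) ℝ :=
  ∑ k : Fin m,
    (symM (Pi2 m n r N A adj B K k * P k * (Pi1 m n N τl τu τv k)ᵀ)
      + eB m n N 1 * (Q1 k + W1 k) * (eB m n N 1)ᵀ
      + eB m n N ((k : ℕ) + 2) * (Q2 k - Q1 k + W2 k - W1 k) * (eB m n N ((k : ℕ) + 2))ᵀ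
      + eB m n N (2 * m + (k : ℕ) + 2) * (W3 k - W2 k) * (eB m n N (2 * m + (k : ℕ) + 2))ᵀ
      - eB m n N (m + (k : ℕ) + 2) * (Q2 k + W3 k) * (eB m n N (m + (k : ℕ) + 2))ᵀ
      + Pi3 m n r N A adj B K * (τl k • R1 k + (τu k - τl k) • R2 k) * (Pi3 m n r N A adj B K)ᵀ
      + symM (Yb m n N Y 0 k * (Mb m n N τl τu τv 0 k)ᵀ
          + Yb m n N Y 1 k * (Mb m n N τl τu τv 1 k)ᵀ
          + Yb m n N Y 2 k * (Mb m n N τl τu τv 2 k)ᵀ))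

/-- `X̄_1 = [τ_1^l Ȳ_{11}, …, τ_m^l Ȳ_{1m}]`. -/
def X1b (m n N : ℕ) (τl : Fin m → ℝ)
    (Y : Fin 3 → Fin m → Fin (2 * N + 1) → Matrix (bg m n N) (ag m n) ℝ) :
    Matrix (bg m n N) (Fin m × kp m n N) ℝ := fun p c =>
  τl c.1 * Yb m n N Y 0 c.1 p c.2

/-- `X̄_{23} = [(τ_k(t)−τ_k^l)Ȳ_{2k} + (τ_k^u−τ_k(t))Ȳ_{3k}]_{k=1,…,m}`. -/
def X23b (m n N : ℕ) (τl τu τv : Fin m → ℝ)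
    (Y : Fin 3 → Fin m → Fin (2 * N + 1) → Matrix (bg m n N) (ag m n) ℝ) :
    Matrix (bg m n N) (Fin m × kp m n N) ℝ := fun p c =>
  (τv c.1 - τl c.1) * Yb m n N Y 1 c.1 p c.2 + (τu c.1 - τv c.1) * Yb m n N Y 2 c.1 p c.2

/-- `RW̄_1 = blockdiag_k ( τ_k^l ⋅ ℐ_N ⊗ (R_{1k} + W̄_{1k}) )`. -/
def RW1b (m n N : ℕ) (τl : Fin m → ℝ)
    (R1 : Fin m → Matrix (ag m n ⊕ ag m n) (ag m n ⊕ ag m n) ℝ)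
    (W1 : Fin m → Matrix (ag m n) (ag m n) ℝ) :
    Matrix (Fin m × kp m n N) (Fin m × kp m n N) ℝ := fun p c =>
  if p.1 = c.1 ∧ p.2.1 = c.2.1 then
    τl p.1 * ((2 * (p.2.1 : ℕ) + 1 : ℕ) : ℝ) * (R1 p.1 + Wb m n (W1 p.1)) p.2.2 c.2.2
  else 0

/-- `RW̄_{23} = blockdiag_k ( (τ_k(t)−τ_k^l)ℐ_N⊗(R_{2k}+W̄_{2k}) + (τ_k^u−τ_k(t))ℐ_N⊗(R_{2k}+W̄_{3k}) )`. -/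
def RW23b (m n N : ℕ) (τl τu τv : Fin m → ℝ)
    (R2 : Fin m → Matrix (ag m n ⊕ ag m n) (ag m n ⊕ ag m n) ℝ)
    (W2 W3 : Fin m → Matrix (ag m n) (ag m n) ℝ) :
    Matrix (Fin m × kp m n N) (Fin m × kp m n N) ℝ := fun p c =>
  if p.1 = c.1 ∧ p.2.1 = c.2.1 then
    ((2 * (p.2.1 : ℕ) + 1 : ℕ) : ℝ) *
      ((τv p.1 - τl p.1) * (R2 p.1 + Wb m n (W2 p.1)) p.2.2 c.2.2
        + (τu p.1 - τv p.1) * (R2 p.1 + Wb m n (W3 p.1)) p.2.2 c.2.2)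
  else 0

/-- The full LMI block matrix `[[Π̄, X̄_1, X̄_{23}],[∗, −RW̄_1, 0],[∗, 0, −RW̄_{23}]]` of
Theorem 1, evaluated at the delay vector `τv`. -/
def LMImat (m n r N : ℕ) (A : Matrix (Fin n) (Fin n) ℝ) (adj : Fin m → Fin m → ℝ)
    (B : Matrix (Fin n) (Fin r) ℝ) (K : Matrix (Fin r) (Fin n) ℝ)
    (τl τu τv : Fin m → ℝ)
    (P : Fin m → Matrix (Fin 3 × ag m n) (Fin 3 × ag m n) ℝ)
    (Q1 Q2 : Fin m → Matrix (ag m n) (ag m n) ℝ)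
    (R1 R2 : Fin m → Matrix (ag m n ⊕ ag m n) (ag m n ⊕ ag m n) ℝ)
    (W1 W2 W3 : Fin m → Matrix (ag m n) (ag m n) ℝ)
    (Y : Fin 3 → Fin m → Fin (2 * N + 1) → Matrix (bg m n N) (ag m n) ℝ) :
    Matrix (bg m n N ⊕ ((Fin m × kp m n N) ⊕ (Fin m × kp m n N)))
      (bg m n N ⊕ ((Fin m × kp m n N) ⊕ (Fin m × kp m n N))) ℝ :=
  Matrix.fromBlocks
    (PibarT m n r N A adj B K τl τu τv P Q1 Q2 R1 R2 W1 W2 W3 Y)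
    (Matrix.of fun p c => Sum.elim (X1b m n N τl Y p) (X23b m n N τl τu τv Y p) c)
    (Matrix.of fun p c => Sum.elim (X1b m n N τl Y c) (X23b m n N τl τu τv Y c) p)
    (Matrix.fromBlocks (-(RW1b m n N τl R1 W1)) 0 0 (-(RW23b m n N τl τu τv R2 W2 W3)))

/-- Control input `u_k(t) = −Σ_{l≠k} a_{kl} K (x_k(t) − x_l(t))`. -/
def uCtrl (m n r : ℕ) (K : Matrix (Fin r) (Fin n) ℝ) (adj : Fin m → Fin m → ℝ)
    (x : Fin m → ℝ → Fin n → ℝ) (k : Fin m) (t : ℝ) : Fin r → ℝ :=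
  -∑ l ∈ Finset.univ.erase k, adj k l • K.mulVec (x k t - x l t)

/-!
Take the sum over the agents of the Lyapunov–Krasovskii functionals
`V_k = ξᵀ P_k ξ + ∫ zᵀ Q_k z + ∬ ωᵀ R_k ω`, where `ω = (ż, z)`. In `V̇` the terms
`-∫ ωᵀ R_k ω` over the segments `[t - τ_k^l, t]`, `[t - τ_k(t), t - τ_k^l]` and
`[t - τ_k^u, t - τ_k(t)]` are bounded as follows. Since `ωᵀ W̄ ω` is the derivative of `zᵀ W z`,
replacing `R` by `R + W̄` costs boundary terms only; then Bessel's inequality for the Legendre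
polynomials bounds the integral by the Legendre coefficients `η` of `ω` of order at most `N`. The
moment matrices `M̄` express these coefficients linearly in `ζ(t)`, so the multipliers `Ȳ` enter
through terms `2 ζᵀ Ȳ (M̄ᵀ ζ - h η)` which vanish along trajectories. What remains is, for each
agent, a convex combination of the forms of the linear matrix inequality at the two extreme values
of its delay, and bounding each agent by its larger extreme selects a vertex of the box. Hence
`V̇ ≤ -c ‖ζ‖²`, and as `‖ζ‖` controls both `z` and `ż`, a Barbalat-type argument gives `z → 0`.
-/

/-! ### Legendre polynomials on the unit interval -/

section Legendre

open Polynomial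

lemma eval_iterate_derivative_eq_zero_of_pow_dvd {R : Type*} [CommRing R] {p q : R[X]} {a : R}
    {n k : ℕ} (hpq : q ^ n ∣ p) (hq : q.eval a = 0) (hk : k < n) :
    (derivative^[k] p).eval a = 0 := by
  obtain ⟨c, hc⟩ := pow_sub_dvd_iterate_derivative_of_pow_dvd k hpq
  rw [hc, eval_mul, eval_pow, hq, zero_pow (Nat.sub_ne_zero_of_lt hk), zero_mul]

lemma integral_eval_mul_derivative (p q : ℝ[X]) (a b : ℝ) :
    ∫ x in a..b, p.eval x * (derivative q).eval x =
      p.eval b * q.eval b - p.eval a * q.eval a - ∫ x in a..b, (derivative p).eval x * q.eval x :=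
  intervalIntegral.integral_mul_deriv_eq_deriv_mul (fun x _ => p.hasDerivAt x)
    (fun x _ => q.hasDerivAt x) (p.derivative.continuous.intervalIntegrable a b)
    (q.derivative.continuous.intervalIntegrable a b)

lemma integral_eval_mul_iterate_derivative (q : ℝ[X]) {a b : ℝ} {k : ℕ}
    (ha : ∀ i < k, (derivative^[i] q).eval a = 0) (hb : ∀ i < k, (derivative^[i] q).eval b = 0)
    (p : ℝ[X]) :
    ∫ x in a..b, p.eval x * (derivative^[k] q).eval x =
      (-1) ^ k * ∫ x in a..b, (derivative^[k] p).eval x * q.eval x := by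
  induction k generalizing p with
  | zero => simp
  | succ k ih =>
    rw [Function.iterate_succ_apply', integral_eval_mul_derivative, ha k k.lt_succ_self,
      hb k k.lt_succ_self, ih (fun i hi => ha i (hi.trans k.lt_succ_self))
        (fun i hi => hb i (hi.trans k.lt_succ_self)), ← Function.iterate_succ_apply, pow_succ]
    ring

/-- The Legendre polynomial of degree `j` transported to `[0, 1]` and normalized to take the value
`1` at `1`; its coefficients are the paper's `γ_{i,j+1}`. -/
noncomputable def unitLegendre (j : ℕ) : ℝ[X] :=
  C ((-1) ^ j) * (shiftedLegendre j).map (Int.castRingHom ℝ)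

lemma eval_unitLegendre (j : ℕ) (x : ℝ) :
    (unitLegendre j).eval x = ∑ i ∈ Finset.range (j + 1), gam i (j + 1) * x ^ i := by
  simp only [unitLegendre, shiftedLegendre, Polynomial.map_sum, eval_mul, eval_C, eval_finsetSum,
    Finset.mul_sum]
  refine Finset.sum_congr rfl fun i _ => ?_
  rw [gam, show j + 1 + i - 1 = j + i by lia, ← Nat.choose_symm_add, Nat.add_sub_cancel]
  simp
  ring

lemma factorial_mul_unitLegendre (n : ℕ) :
    C (n.factorial : ℝ) * unitLegendre n =
      C ((-1) ^ n) * derivative^[n] ((X : ℝ[X]) ^ n * (1 - X) ^ n) := by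
  have rodrigues := congrArg (Polynomial.map (Int.castRingHom ℝ))
    (factorial_mul_shiftedLegendre_eq n)
  rw [← iterate_derivative_map] at rodrigues
  simp only [Polynomial.map_mul, Polynomial.map_natCast, Polynomial.map_pow, Polynomial.map_sub,
    Polynomial.map_one, map_X] at rodrigues
  rw [← rodrigues, unitLegendre, map_natCast]
  ring

lemma degree_unitLegendre (n : ℕ) : (unitLegendre n).degree = n := by
  rw [unitLegendre, degree_C_mul (pow_ne_zero n (by norm_num)),
    degree_map_eq_of_injective (RingHom.injective_int _), degree_shiftedLegendre]

lemma eval_one_unitLegendre (n : ℕ) : (unitLegendre n).eval 1 = 1 := by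
  have reflected : aeval (1 : ℝ) (shiftedLegendre n) = (-1) ^ n := by
    rw [shiftedLegendre_eval_symm, sub_self, ← coeff_zero_eq_aeval_zero', coeff_shiftedLegendre]
    simp
  rw [unitLegendre, eval_mul, eval_C, eval_map, ← algebraMap_int_eq, ← aeval_def, reflected,
    ← mul_pow]
  norm_num

lemma integral_unitLegendre_mul_of_degree_lt {n : ℕ} {q : ℝ[X]} (hq : q.degree < n) :
    ∫ x in (0 : ℝ)..1, q.eval x * (unitLegendre n).eval x = 0 := by
  have vanish {a : ℝ} (i : ℕ) (hi : i < n) (ha : a = 0 ∨ a = 1) :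
      (derivative^[i] ((X : ℝ[X]) ^ n * (1 - X) ^ n)).eval a = 0 := by
    rcases ha with rfl | rfl
    · exact eval_iterate_derivative_eq_zero_of_pow_dvd (dvd_mul_right _ _) eval_X hi
    · exact eval_iterate_derivative_eq_zero_of_pow_dvd (dvd_mul_left _ _) (by simp) hi
  have parts := integral_eval_mul_iterate_derivative ((X : ℝ[X]) ^ n * (1 - X) ^ n)
    (fun i hi => vanish i hi (.inl rfl)) (fun i hi => vanish i hi (.inr rfl)) q
  have deriv_zero : derivative^[n] q = 0 := by
    rcases eq_or_ne q 0 with rfl | hq0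
    · exact iterate_derivative_zero
    · exact iterate_derivative_eq_zero ((natDegree_lt_iff_degree_lt hq0).2 hq)
  have rodrigues (x : ℝ) := congrArg (eval x) (factorial_mul_unitLegendre n)
  simp only [eval_mul, eval_C] at rodrigues
  have fact_mul :
      (n.factorial : ℝ) * ∫ x in (0 : ℝ)..1, q.eval x * (unitLegendre n).eval x = 0 := by
    simp_rw [← intervalIntegral.integral_const_mul, mul_left_comm (n.factorial : ℝ), rodrigues,
      mul_left_comm (eval _ q), intervalIntegral.integral_const_mul, parts, deriv_zero]
    simp
  exact (mul_eq_zero.1 fact_mul).resolve_left (by positivity)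

-- The Euler operator `X d/dX` multiplies the leading term by `n`.
lemma degree_X_mul_derivative_sub_lt {p : ℝ[X]} {n : ℕ} (hp : p.degree = n) :
    (X * derivative p - C (n : ℝ) * p).degree < (n : WithBot ℕ) := by
  rw [degree_lt_iff_coeff_zero]
  intro k hk
  rcases hk.lt_or_eq with hk | rfl
  · have coeff_zero : p.coeff k = 0 := coeff_eq_zero_of_degree_lt (by rw [hp]; exact_mod_cast hk)
    obtain ⟨k, rfl⟩ := Nat.exists_eq_succ_of_ne_zero (Nat.ne_zero_of_lt hk)
    simp [coeff_X_mul, coeff_derivative, coeff_zero]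
  · cases n with
    | zero => simp
    | succ k =>
      rw [coeff_sub, coeff_X_mul, coeff_derivative, coeff_C_mul]
      push_cast
      ring

lemma integral_unitLegendre_sq (n : ℕ) :
    ∫ x in (0 : ℝ)..1, (unitLegendre n).eval x * (unitLegendre n).eval x = (2 * (n : ℝ) + 1)⁻¹ := by
  set L := unitLegendre n
  have boundary := integral_eval_mul_derivative X (L * L) 0 1
  have lower := integral_unitLegendre_mul_of_degree_lt
    (degree_X_mul_derivative_sub_lt (degree_unitLegendre n))
  have split (x : ℝ) : (X : ℝ[X]).eval x * (derivative (L * L)).eval x =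
      2 * ((X * derivative L - C (n : ℝ) * L).eval x * L.eval x)
        + 2 * n * (L.eval x * L.eval x) := by
    simp only [derivative_mul, eval_add, eval_sub, eval_mul, eval_X, eval_C]
    ring
  simp only [split] at boundary
  rw [intervalIntegral.integral_add (Continuous.intervalIntegrable (by fun_prop) _ _)
    (Continuous.intervalIntegrable (by fun_prop) _ _), intervalIntegral.integral_const_mul,
    intervalIntegral.integral_const_mul, lower] at boundary
  simp only [derivative_X, eval_one, eval_X, eval_mul, one_mul, zero_mul,
    show L.eval 1 = 1 from eval_one_unitLegendre n] at boundary
  exact eq_inv_of_mul_eq_one_left (by linarith)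

lemma integral_unitLegendre_mul_unitLegendre (i j : ℕ) :
    ∫ x in (0 : ℝ)..1, (unitLegendre i).eval x * (unitLegendre j).eval x =
      if i = j then (2 * (i : ℝ) + 1)⁻¹ else 0 := by
  rcases lt_trichotomy i j with h | rfl | h
  · rw [if_neg h.ne]
    exact integral_unitLegendre_mul_of_degree_lt (by rw [degree_unitLegendre]; exact_mod_cast h)
  · rw [if_pos rfl, integral_unitLegendre_sq]
  · simp_rw [if_neg h.ne', mul_comm ((unitLegendre i).eval _)]
    exact integral_unitLegendre_mul_of_degree_lt (by rw [degree_unitLegendre]; exact_mod_cast h)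

end Legendre

/-! ### Quadratic forms -/

section QuadraticForm

variable {ι κ : Type*} [Fintype ι] [Fintype κ]

lemma dotProduct_mulVec_comm_of_isSymm {M : Matrix ι ι ℝ} (hM : M.IsSymm) (u v : ι → ℝ) :
    u ⬝ᵥ M *ᵥ v = v ⬝ᵥ M *ᵥ u := by
  rw [dotProduct_mulVec, dotProduct_comm, ← mulVec_transpose, hM.eq]

lemma integral_const_dotProduct (v : ι → ℝ) {f : ℝ → ι → ℝ} (hf : Continuous f) (a b : ℝ) :
    ∫ x in a..b, v ⬝ᵥ f x = v ⬝ᵥ ∫ x in a..b, f x :=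
  (LinearMap.toContinuousLinearMap (dotProductBilin ℝ ℝ v)).intervalIntegral_comp_comm
    (hf.intervalIntegrable a b)

lemma dotProduct_mul_mul_transpose_mulVec (X : Matrix ι κ ℝ) (M : Matrix κ κ ℝ)
    (Z : Matrix ι κ ℝ) (v : ι → ℝ) :
    v ⬝ᵥ (X * M * Zᵀ) *ᵥ v = (v ᵥ* X) ⬝ᵥ M *ᵥ (v ᵥ* Z) := by
  rw [← mulVec_mulVec, ← mulVec_mulVec, mulVec_transpose, dotProduct_mulVec]

lemma dotProduct_mul_transpose_mulVec (X Z : Matrix ι κ ℝ) (v : ι → ℝ) :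
    v ⬝ᵥ (X * Zᵀ) *ᵥ v = (v ᵥ* X) ⬝ᵥ (v ᵥ* Z) := by
  rw [← mulVec_mulVec, mulVec_transpose, dotProduct_mulVec]

lemma dotProduct_symM_mulVec (X : Matrix ι ι ℝ) (v : ι → ℝ) :
    v ⬝ᵥ symM X *ᵥ v = 2 * (v ⬝ᵥ X *ᵥ v) := by
  rw [symM, add_mulVec, dotProduct_add, mulVec_transpose, dotProduct_comm v (v ᵥ* X),
    ← dotProduct_mulVec, two_mul]

lemma continuous_dotProduct_mulVec {X : Type*} [TopologicalSpace X] (M : Matrix ι ι ℝ)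
    {f : X → ι → ℝ} (hf : Continuous f) : Continuous fun x => f x ⬝ᵥ M *ᵥ f x :=
  hf.dotProduct (continuous_const.matrix_mulVec hf)

lemma hasDerivAt_dotProduct_mulVec {M : Matrix ι ι ℝ} (hM : M.IsSymm) {u : ℝ → ι → ℝ}
    {u' : ι → ℝ} {t : ℝ} (hu : HasDerivAt u u' t) :
    HasDerivAt (fun s => u s ⬝ᵥ M *ᵥ u s) (2 * (u' ⬝ᵥ M *ᵥ u t)) t := by
  have hMu : HasDerivAt (fun s => M *ᵥ u s) (M *ᵥ u') t :=
    (LinearMap.toContinuousLinearMap M.mulVecLin).hasFDerivAt.comp_hasDerivAt t hu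
  have product_rule : HasDerivAt (fun s => u s ⬝ᵥ M *ᵥ u s)
      (∑ i, (u' i * (M *ᵥ u t) i + u t i * (M *ᵥ u') i)) t :=
    HasDerivAt.fun_sum fun i _ => (hasDerivAt_pi.1 hu i).mul (hasDerivAt_pi.1 hMu i)
  convert product_rule using 1
  rw [Finset.sum_add_distrib, two_mul]
  exact congrArg _ (dotProduct_mulVec_comm_of_isSymm hM _ _)

lemma exists_mul_norm_sq_le_of_posDef {M : Matrix ι ι ℝ} (hM : M.PosDef) :
    ∃ c > 0, ∀ x : ι → ℝ, c * ‖x‖ ^ 2 ≤ x ⬝ᵥ M *ᵥ x := by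
  rcases isEmpty_or_nonempty ι with _ | _
  · exact ⟨1, one_pos, fun x => by simp [Subsingleton.elim x 0]⟩
  obtain ⟨y, hy, hmin⟩ := (isCompact_sphere (0 : ι → ℝ) 1).exists_isMinOn
    (NormedSpace.sphere_nonempty.2 zero_le_one)
    (continuous_dotProduct_mulVec M continuous_id).continuousOn
  refine ⟨y ⬝ᵥ M *ᵥ y, hM.dotProduct_mulVec_pos (ne_zero_of_mem_unit_sphere ⟨y, hy⟩), fun x => ?_⟩
  rcases eq_or_ne x 0 with rfl | hx
  · simp
  have norm_ne : ‖x‖ ≠ 0 := norm_ne_zero_iff.2 hx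
  have le_normalized : y ⬝ᵥ M *ᵥ y ≤ (‖x‖⁻¹ • x) ⬝ᵥ M *ᵥ (‖x‖⁻¹ • x) :=
    hmin (by simp [norm_smul, norm_ne])
  simp only [mulVec_smul, dotProduct_smul, smul_dotProduct, smul_eq_mul] at le_normalized
  calc y ⬝ᵥ M *ᵥ y * ‖x‖ ^ 2 ≤ (‖x‖⁻¹ * (‖x‖⁻¹ * x ⬝ᵥ M *ᵥ x)) * ‖x‖ ^ 2 := by gcongr
    _ = x ⬝ᵥ M *ᵥ x := by field_simp

end QuadraticForm

/-! ### Bessel's inequality for matrix quadratic forms -/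

section Bessel

variable {ι κ : Type*} [Fintype ι] [Fintype κ]

/-- The projection `∑ j, (d j)⁻¹ ⟨φ j, w⟩ φ j` of `w` onto the span of the `φ j`, which are meant to
be orthogonal in `L²(a, b)` with squared norms `d j`. -/
noncomputable def orthogonalExpansion (φ : κ → ℝ → ℝ) (d : κ → ℝ) (w : ℝ → ι → ℝ) (a b x : ℝ) :
    ι → ℝ :=
  ∑ j, ((d j)⁻¹ * φ j x) • ∫ y in a..b, φ j y • w y

variable {φ : κ → ℝ → ℝ} {d : κ → ℝ} {a b : ℝ} {w : ℝ → ι → ℝ}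

lemma continuous_orthogonalExpansion (hφ : ∀ j, Continuous (φ j)) :
    Continuous (orthogonalExpansion φ d w a b) := by
  unfold orthogonalExpansion
  fun_prop

lemma integral_orthogonalExpansion_dotProduct_mulVec (hφ : ∀ j, Continuous (φ j))
    (R : Matrix ι ι ℝ) {u : ℝ → ι → ℝ} (hu : Continuous u) :
    ∫ x in a..b, orthogonalExpansion φ d w a b x ⬝ᵥ R *ᵥ u x =
      ∑ j, (d j)⁻¹ * ((∫ x in a..b, φ j x • w x) ⬝ᵥ R *ᵥ ∫ x in a..b, φ j x • u x) := by
  have expand (x : ℝ) : orthogonalExpansion φ d w a b x ⬝ᵥ R *ᵥ u x =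
      ∑ j, (d j)⁻¹ * (((∫ y in a..b, φ j y • w y) ᵥ* R) ⬝ᵥ φ j x • u x) := by
    simp only [orthogonalExpansion, sum_dotProduct, smul_dotProduct, dotProduct_smul, smul_eq_mul,
      ← dotProduct_mulVec, mul_assoc]
  have hφu (j : κ) : Continuous fun x => φ j x • u x := (hφ j).smul hu
  simp only [expand]
  rw [intervalIntegral.integral_finsetSum fun j _ =>
    ((continuous_const.dotProduct (hφu j)).intervalIntegrable _ _).const_mul _]
  simp only [intervalIntegral.integral_const_mul, integral_const_dotProduct _ (hφu _),
    dotProduct_mulVec]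

lemma integral_smul_orthogonalExpansion [DecidableEq κ] (hφ : ∀ j, Continuous (φ j))
    (hd : ∀ j, d j ≠ 0)
    (orth : ∀ i j, ∫ x in a..b, φ i x * φ j x = if i = j then d i else 0) (i : κ) :
    ∫ x in a..b, φ i x • orthogonalExpansion φ d w a b x = ∫ x in a..b, φ i x • w x := by
  simp only [orthogonalExpansion, Finset.smul_sum, smul_smul, mul_left_comm (φ i _)]
  rw [intervalIntegral.integral_finsetSum fun j _ =>
    Continuous.intervalIntegrable (by fun_prop) _ _]
  simp only [intervalIntegral.integral_smul_const, intervalIntegral.integral_const_mul, orth]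
  simp [hd i]

lemma sum_inv_mul_dotProduct_mulVec_le_integral [DecidableEq κ] (hab : a ≤ b)
    (hφ : ∀ j, Continuous (φ j))
    (hd : ∀ j, d j ≠ 0) (orth : ∀ i j, ∫ x in a..b, φ i x * φ j x = if i = j then d i else 0)
    {R : Matrix ι ι ℝ} (hR : R.PosSemidef) (hw : Continuous w) :
    ∑ j, (d j)⁻¹ * ((∫ x in a..b, φ j x • w x) ⬝ᵥ R *ᵥ ∫ x in a..b, φ j x • w x) ≤
      ∫ x in a..b, w x ⬝ᵥ R *ᵥ w x := by
  set p := orthogonalExpansion φ d w a b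
  have hp : Continuous p := continuous_orthogonalExpansion hφ
  have residual_nonneg : 0 ≤ ∫ x in a..b, (w x - p x) ⬝ᵥ R *ᵥ (w x - p x) :=
    intervalIntegral.integral_nonneg hab fun x _ => hR.dotProduct_mulVec_nonneg _
  have expand (x : ℝ) : (w x - p x) ⬝ᵥ R *ᵥ (w x - p x) =
      w x ⬝ᵥ R *ᵥ w x - 2 * (p x ⬝ᵥ R *ᵥ w x) + p x ⬝ᵥ R *ᵥ p x := by
    rw [mulVec_sub, sub_dotProduct, dotProduct_sub, dotProduct_sub,
      dotProduct_mulVec_comm_of_isSymm (M := R) hR.isHermitian (w x) (p x)]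
    ring
  have integrable {u v : ℝ → ι → ℝ} (hu : Continuous u) (hv : Continuous v) :
      IntervalIntegrable (fun x => u x ⬝ᵥ R *ᵥ v x) MeasureTheory.volume a b :=
    (hu.dotProduct (continuous_const.matrix_mulVec hv)).intervalIntegrable _ _
  simp only [expand] at residual_nonneg
  rw [intervalIntegral.integral_add
      ((integrable hw hw).sub ((integrable hp hw).const_mul 2)) (integrable hp hp),
    intervalIntegral.integral_sub (integrable hw hw) ((integrable hp hw).const_mul 2),
    intervalIntegral.integral_const_mul,
    integral_orthogonalExpansion_dotProduct_mulVec hφ R hw,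
    integral_orthogonalExpansion_dotProduct_mulVec hφ R hp] at residual_nonneg
  simp only [p, integral_smul_orthogonalExpansion hφ hd orth] at residual_nonneg
  linarith

end Bessel

/-! ### Integrals over a moving window -/

section MovingWindow

variable {E : Type*} [NormedAddCommGroup E] [NormedSpace ℝ E] [CompleteSpace E] {q : ℝ → E}

lemma hasDerivAt_integral_window (hq : Continuous q) (a b t : ℝ) :
    HasDerivAt (fun t => ∫ s in (t - b)..(t - a), q s) (q (t - a) - q (t - b)) t := by
  have primitive (c : ℝ) : HasDerivAt (fun t => ∫ s in 0..(t - c), q s) (q (t - c)) t :=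
    (hq.integral_hasStrictDerivAt 0 (t - c)).hasDerivAt.comp_sub_const t c
  refine ((primitive a).sub (primitive b)).congr_of_eventuallyEq (.of_forall fun t => ?_)
  exact (intervalIntegral.integral_interval_sub_left (hq.intervalIntegrable _ _)
    (hq.intervalIntegrable _ _)).symm

lemma hasDerivAt_integral_integral_window (hq : Continuous q) (a b t : ℝ) :
    HasDerivAt (fun t => ∫ r in (t - b)..(t - a), ∫ s in r..t, q s)
      ((b - a) • q t - ∫ s in (t - b)..(t - a), q s) t := by
  have hQ (t : ℝ) : HasDerivAt (fun t => ∫ s in 0..t, q s) (q t) t :=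
    (hq.integral_hasStrictDerivAt 0 t).hasDerivAt
  have hQc : Continuous fun t => ∫ s in 0..t, q s :=
    continuous_iff_continuousAt.2 fun t => (hQ t).continuousAt
  have sub_primitive (r t : ℝ) : ∫ s in r..t, q s = (∫ s in 0..t, q s) - ∫ s in 0..r, q s :=
    (intervalIntegral.integral_interval_sub_left (hq.intervalIntegrable _ _)
      (hq.intervalIntegrable _ _)).symm
  have deriv_split := ((hQ t).const_smul (b - a)).sub (hasDerivAt_integral_window hQc a b t)
  rw [← sub_primitive] at deriv_split
  refine deriv_split.congr_of_eventuallyEq (.of_forall fun t => ?_)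
  simp only [Pi.sub_apply, Pi.smul_apply]
  rw [intervalIntegral.integral_congr fun r _ => sub_primitive r t,
    intervalIntegral.integral_sub intervalIntegrable_const (hQc.intervalIntegrable _ _),
    intervalIntegral.integral_const, sub_sub_sub_cancel_left]

lemma integral_integral_window_nonneg {q : ℝ → ℝ} (hq : ∀ s, 0 ≤ q s) {a b : ℝ} (ha : 0 ≤ a)
    (hab : a ≤ b) (t : ℝ) : 0 ≤ ∫ r in (t - b)..(t - a), ∫ s in r..t, q s :=
  intervalIntegral.integral_nonneg (by linarith) fun _ hr =>
    intervalIntegral.integral_nonneg (by linarith [hr.2]) fun s _ => hq s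

end MovingWindow

/-! ### A Barbalat-type convergence criterion -/

open Filter Topology in
/-- Both `V` and `V + c g` are nonincreasing and bounded below, so `g` has a limit; by the mean
value theorem `g` is small somewhere in `(t, t + 1)` for large `t`, so this limit is `0`. -/
lemma tendsto_zero_of_deriv_le {V V' g g' : ℝ → ℝ} {c : ℝ} (hc : 0 < c)
    (hV : ∀ t, HasDerivAt V (V' t) t) (hg : ∀ t, HasDerivAt g (g' t) t)
    (hV0 : ∀ t, 0 ≤ V t) (hg0 : ∀ t, 0 ≤ g t)
    (hVg : ∀ t, V' t ≤ -(c * g t)) (hVg' : ∀ t, V' t ≤ -(c * |g' t|)) :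
    Tendsto g atTop (𝓝 0) := by
  have tendsto_of_nonincreasing {f f' : ℝ → ℝ} (hf : ∀ t, HasDerivAt f (f' t) t)
      (hf' : ∀ t, f' t ≤ 0) (hf0 : ∀ t, 0 ≤ f t) : ∃ l, Tendsto f atTop (𝓝 l) :=
    ⟨_, tendsto_atTop_ciInf (antitone_of_deriv_nonpos (fun t => (hf t).differentiableAt)
      fun t => (hf t).deriv.trans_le (hf' t)) ⟨0, Set.forall_mem_range.2 hf0⟩⟩
  obtain ⟨v, hv⟩ := tendsto_of_nonincreasing hV
    (fun t => (hVg t).trans (neg_nonpos.2 (mul_nonneg hc.le (hg0 t)))) hV0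
  obtain ⟨l, hl⟩ := tendsto_of_nonincreasing (fun t => (hV t).add ((hg t).const_mul c))
    (fun t => by linarith [hVg' t, mul_le_mul_of_nonneg_left (le_abs_self (g' t)) hc.le])
    (fun t => add_nonneg (hV0 t) (mul_nonneg hc.le (hg0 t)))
  have hcg : Tendsto (fun t => c * g t) atTop (𝓝 (l - v)) := by
    simpa using hl.sub hv
  have decrease (t : ℝ) : ∃ s ∈ Set.Ioo t (t + 1), c * g s ≤ V t - V (t + 1) := by
    obtain ⟨s, hs, hslope⟩ := exists_hasDerivAt_eq_slope V V' (lt_add_one t)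
      (fun s _ => (hV s).continuousAt.continuousWithinAt) (fun s _ => hV s)
    rw [add_sub_cancel_left, div_one] at hslope
    exact ⟨s, hs, by linarith [hVg s]⟩
  choose ξ hξ hξV using decrease
  have hξ_top : Tendsto ξ atTop atTop := tendsto_atTop_mono (fun t => (hξ t).1.le) tendsto_id
  have hdiff : Tendsto (fun t => V t - V (t + 1)) atTop (𝓝 0) := by
    simpa using hv.sub (hv.comp (tendsto_atTop_add_const_right _ 1 tendsto_id))
  have hlv : l - v = 0 := le_antisymm
    (le_of_tendsto_of_tendsto' (hcg.comp hξ_top) hdiff hξV)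
    (ge_of_tendsto' hcg fun t => mul_nonneg hc.le (hg0 t))
  simpa [hlv, hc.ne'] using hcg.const_mul c⁻¹

/-! ### Legendre moments on a segment -/

section Segment

variable {E : Type*} [NormedAddCommGroup E] [NormedSpace ℝ E]

/-- The `i`-th moment of `w` on `[a, a + h]`, rescaled to the unit interval. By Cauchy's formula for
repeated integration this is the `(i + 1)`-fold iterated integral of `w` over the segment with the
factor `i! / h ^ (i + 1)`, extended continuously to `h = 0`. -/
noncomputable def segMoment (w : ℝ → E) (a h : ℝ) (i : ℕ) : E :=
  ∫ y in (0 : ℝ)..1, y ^ i • w (a + h * y)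

/-- The inner product of `w`, rescaled from `[a, a + h]` to the unit interval, with the `j`-th
shifted Legendre polynomial. -/
noncomputable def legendreCoeff (w : ℝ → E) (a h : ℝ) (j : ℕ) : E :=
  ∫ y in (0 : ℝ)..1, (unitLegendre j).eval y • w (a + h * y)

variable {w : ℝ → E} {a b h : ℝ}

lemma legendreCoeff_eq_sum_segMoment (hw : Continuous w) (a h : ℝ) (j : ℕ) :
    legendreCoeff w a h j = ∑ i ∈ Finset.range (j + 1), gam i (j + 1) • segMoment w a h i := by
  simp only [legendreCoeff, segMoment, eval_unitLegendre, Finset.sum_smul, mul_smul]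
  rw [intervalIntegral.integral_finsetSum fun i _ =>
    Continuous.intervalIntegrable (by fun_prop) _ _]
  simp only [intervalIntegral.integral_smul]

lemma smul_segMoment_zero (w : ℝ → E) (hab : a + h = b) :
    h • segMoment w a h 0 = ∫ s in a..b, w s := by
  simp [segMoment, hab]

lemma smul_segMoment_deriv [CompleteSpace E] {z zd : ℝ → E} (hz : ∀ t, HasDerivAt z (zd t) t)
    (hzd : Continuous zd) (a h : ℝ) (i : ℕ) :
    h • segMoment zd a h i =
      z (a + h) - if i = 0 then z a else (i : ℝ) • segMoment z a h (i - 1) := by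
  have hzc : Continuous z := continuous_iff_continuousAt.2 fun t => (hz t).continuousAt
  have product_rule (y : ℝ) : HasDerivAt (fun y => y ^ i • z (a + h * y))
      (h • y ^ i • zd (a + h * y) + (i : ℝ) • y ^ (i - 1) • z (a + h * y)) y := by
    have hlin : HasDerivAt (fun y : ℝ => a + h * y) h y := by
      simpa using ((hasDerivAt_id y).const_mul h).const_add a
    refine ((hasDerivAt_pow i y).smul ((hz (a + h * y)).scomp y hlin)).congr_deriv ?_
    simp only [Function.comp_apply, smul_comm h, mul_smul]
  have parts := intervalIntegral.integral_eq_sub_of_hasDerivAt (a := 0) (b := 1)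
    (fun y _ => product_rule y) (Continuous.intervalIntegrable (by fun_prop) _ _)
  rw [intervalIntegral.integral_add (Continuous.intervalIntegrable (by fun_prop) _ _)
    (Continuous.intervalIntegrable (by fun_prop) _ _), intervalIntegral.integral_smul,
    intervalIntegral.integral_smul, ← eq_sub_iff_add_eq] at parts
  refine parts.trans ?_
  rcases eq_or_ne i 0 with rfl | hi <;> simp [segMoment, *]

lemma smul_legendreCoeff_deriv [CompleteSpace E] {z zd : ℝ → E} (hz : ∀ t, HasDerivAt z (zd t) t)
    (hzd : Continuous zd) (a h : ℝ) (j : ℕ) :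
    h • legendreCoeff zd a h j = ∑ i ∈ Finset.range (j + 1), gam i (j + 1) •
      (z (a + h) - if i = 0 then z a else (i : ℝ) • segMoment z a h (i - 1)) := by
  simp only [← smul_segMoment_deriv hz hzd, legendreCoeff_eq_sum_segMoment hzd, Finset.smul_sum,
    smul_comm h]

end Segment

section StateDerivative

variable {α : Type*} {z zd : ℝ → α → ℝ}

/-- The stacked vector `(ż(s), z(s))` on which the matrices `R` and `W̄` act. -/
def derivState (z zd : ℝ → α → ℝ) (s : ℝ) : α ⊕ α → ℝ := Sum.elim (zd s) (z s)

lemma continuous_derivState (hz : Continuous z) (hzd : Continuous zd) :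
    Continuous (derivState z zd) :=
  continuous_pi fun c => match c with
    | .inl c => (continuous_apply c).comp hzd
    | .inr c => (continuous_apply c).comp hz

variable [Fintype α]

lemma legendreCoeff_apply {w : ℝ → α → ℝ} (hw : Continuous w) (a h : ℝ) (j : ℕ) (c : α) :
    legendreCoeff w a h j c = legendreCoeff (fun s => w s c) a h j :=
  ((ContinuousLinearMap.proj (R := ℝ) (φ := fun _ : α => ℝ) c).intervalIntegral_comp_comm
    (Continuous.intervalIntegrable (by fun_prop) 0 1)).symm

lemma legendreCoeff_derivState (hz : Continuous z) (hzd : Continuous zd) (a h : ℝ) (j : ℕ) :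
    legendreCoeff (derivState z zd) a h j =
      Sum.elim (legendreCoeff zd a h j) (legendreCoeff z a h j) := by
  funext c
  rw [legendreCoeff_apply (continuous_derivState hz hzd)]
  cases c
  · exact (legendreCoeff_apply hzd a h j _).symm
  · exact (legendreCoeff_apply hz a h j _).symm

/-- The Legendre coefficients of `w` of order at most `N`, stacked into one vector. -/
noncomputable def legendreStack (N : ℕ) (w : ℝ → α → ℝ) (a h : ℝ) : Fin (N + 1) × α → ℝ :=
  fun c => legendreCoeff w a h c.1 c.2

/-- The quadratic form of `ℐ_N ⊗ R`, where `ℐ_N = diag(1, 3, …, 2N + 1)`. -/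
def legendreForm {N : ℕ} (R : Matrix α α ℝ) (η : Fin (N + 1) × α → ℝ) : ℝ :=
  ∑ j : Fin (N + 1), (2 * ((j : ℕ) : ℝ) + 1) * ((fun a => η (j, a)) ⬝ᵥ R *ᵥ fun a => η (j, a))

lemma legendreForm_neg {N : ℕ} (R : Matrix α α ℝ) (η : Fin (N + 1) × α → ℝ) :
    legendreForm R (-η) = legendreForm R η := by
  refine Finset.sum_congr rfl fun j _ => ?_
  have neg_block : (fun a => (-η) (j, a)) = -fun a => η (j, a) := rfl
  rw [neg_block, mulVec_neg, neg_dotProduct_neg]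

lemma mul_legendreForm_legendreStack_le_integral {w : ℝ → α → ℝ}
    (hw : Continuous w) (N : ℕ) {R : Matrix α α ℝ} (hR : R.PosSemidef) {a b h : ℝ} (hh : 0 ≤ h)
    (hab : a + h = b) :
    h * legendreForm R (legendreStack N w a h) ≤ ∫ s in a..b, w s ⬝ᵥ R *ᵥ w s := by
  have bessel := sum_inv_mul_dotProduct_mulVec_le_integral zero_le_one
    (φ := fun (j : Fin (N + 1)) y => (unitLegendre j).eval y)
    (d := fun j => (2 * ((j : ℕ) : ℝ) + 1)⁻¹)
    (fun j => (unitLegendre j).continuous) (fun j => by positivity)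
    (fun i j => by simp only [integral_unitLegendre_mul_unitLegendre, Fin.val_inj]) hR
    (hw.comp (by fun_prop : Continuous fun y : ℝ => a + h * y))
  simp only [inv_inv, Function.comp_apply] at bessel
  calc h * legendreForm R (legendreStack N w a h)
      ≤ h * ∫ y in (0 : ℝ)..1, w (a + h * y) ⬝ᵥ R *ᵥ w (a + h * y) :=
        mul_le_mul_of_nonneg_left bessel hh
    _ = ∫ s in a..b, w s ⬝ᵥ R *ᵥ w s := by
        simpa [hab] using intervalIntegral.mul_integral_comp_add_mul (a := 0) (b := 1)
          (f := fun s => w s ⬝ᵥ R *ᵥ w s) (c := h) (d := a)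

end StateDerivative

section SlackIntegral

variable {m n : ℕ} {W : Matrix (ag m n) (ag m n) ℝ}

lemma sumElim_dotProduct_Wb_mulVec (hW : W.IsSymm) (u v : ag m n → ℝ) :
    Sum.elim u v ⬝ᵥ Wb m n W *ᵥ Sum.elim u v = 2 * (u ⬝ᵥ W *ᵥ v) := by
  have Wb_eq : Wb m n W = fromBlocks 0 W W 0 := by
    ext (_ | _) (_ | _) <;> rfl
  rw [Wb_eq, fromBlocks_mulVec, sumElim_dotProduct_sumElim, Sum.elim_comp_inl, Sum.elim_comp_inr,
    zero_mulVec, zero_mulVec, zero_add, add_zero, dotProduct_mulVec_comm_of_isSymm hW v u, two_mul]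

/-- `ωᵀ W̄ ω = d/ds (zᵀ W z)`, so adding `W̄` to `R` only produces boundary terms. -/
lemma integral_add_Wb_eq (hW : W.IsSymm) {z zd : ℝ → ag m n → ℝ}
    (hz : ∀ t, HasDerivAt z (zd t) t) (hzd : Continuous zd)
    (R : Matrix (ag m n ⊕ ag m n) (ag m n ⊕ ag m n) ℝ) (a b : ℝ) :
    ∫ s in a..b, derivState z zd s ⬝ᵥ (R + Wb m n W) *ᵥ derivState z zd s =
      (∫ s in a..b, derivState z zd s ⬝ᵥ R *ᵥ derivState z zd s) +
        (z b ⬝ᵥ W *ᵥ z b - z a ⬝ᵥ W *ᵥ z a) := by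
  have hω : Continuous (derivState z zd) := continuous_derivState
    (continuous_iff_continuousAt.2 fun t => (hz t).continuousAt) hzd
  have integrable (M : Matrix (ag m n ⊕ ag m n) (ag m n ⊕ ag m n) ℝ) :=
    (continuous_dotProduct_mulVec M hω).intervalIntegrable (μ := MeasureTheory.volume) a b
  simp only [add_mulVec, dotProduct_add]
  rw [intervalIntegral.integral_add (integrable _) (integrable _)]
  congr 1
  refine intervalIntegral.integral_eq_sub_of_hasDerivAt (f := fun s => z s ⬝ᵥ W *ᵥ z s)
    (fun s _ => ?_) (integrable _)
  rw [derivState, sumElim_dotProduct_Wb_mulVec hW]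
  exact hasDerivAt_dotProduct_mulVec hW (hz s)

end SlackIntegral

/-! ### The Lyapunov–Krasovskii functional of one agent -/

section Lyapunov

variable {α : Type*} {z zd : ℝ → α → ℝ} {l u : ℝ}
  {P : Matrix (Fin 3 × α) (Fin 3 × α) ℝ} {Q₁ Q₂ : Matrix α α ℝ}
  {R₁ R₂ : Matrix (α ⊕ α) (α ⊕ α) ℝ}

/-- The vector `(z(t), ∫_{t-l}^t z, ∫_{t-u}^{t-l} z)` on which `P` acts. -/
noncomputable def delayIntegrals [Fintype α] (z : ℝ → α → ℝ) (l u t : ℝ) : Fin 3 × α → ℝ := fun c =>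
  (![z t, ∫ s in (t - l)..t, z s, ∫ s in (t - u)..(t - l), z s] : Fin 3 → α → ℝ) c.1 c.2

/-- The derivative of `delayIntegrals`. -/
def delayIntegralsDeriv (z zd : ℝ → α → ℝ) (l u t : ℝ) : Fin 3 × α → ℝ := fun c =>
  (![zd t, z t - z (t - l), z (t - l) - z (t - u)] : Fin 3 → α → ℝ) c.1 c.2

variable [Fintype α]

/-- The Lyapunov–Krasovskii functional of an agent whose delay ranges over `[l, u]`. -/
noncomputable def lyapunov (z zd : ℝ → α → ℝ) (P : Matrix (Fin 3 × α) (Fin 3 × α) ℝ)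
    (Q₁ Q₂ : Matrix α α ℝ) (R₁ R₂ : Matrix (α ⊕ α) (α ⊕ α) ℝ) (l u t : ℝ) : ℝ :=
  delayIntegrals z l u t ⬝ᵥ P *ᵥ delayIntegrals z l u t
  + (∫ s in (t - l)..t, z s ⬝ᵥ Q₁ *ᵥ z s)
  + (∫ s in (t - u)..(t - l), z s ⬝ᵥ Q₂ *ᵥ z s)
  + (∫ r in (t - l)..t, ∫ s in r..t, derivState z zd s ⬝ᵥ R₁ *ᵥ derivState z zd s)
  + ∫ r in (t - u)..(t - l), ∫ s in r..t, derivState z zd s ⬝ᵥ R₂ *ᵥ derivState z zd s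

/-- The derivative of `lyapunov` along a trajectory with velocity `zd`. -/
noncomputable def lyapunovDeriv (z zd : ℝ → α → ℝ) (P : Matrix (Fin 3 × α) (Fin 3 × α) ℝ)
    (Q₁ Q₂ : Matrix α α ℝ) (R₁ R₂ : Matrix (α ⊕ α) (α ⊕ α) ℝ) (l u t : ℝ) : ℝ :=
  2 * (delayIntegralsDeriv z zd l u t ⬝ᵥ P *ᵥ delayIntegrals z l u t)
  + (z t ⬝ᵥ Q₁ *ᵥ z t - z (t - l) ⬝ᵥ Q₁ *ᵥ z (t - l))
  + (z (t - l) ⬝ᵥ Q₂ *ᵥ z (t - l) - z (t - u) ⬝ᵥ Q₂ *ᵥ z (t - u))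
  + (l * (derivState z zd t ⬝ᵥ R₁ *ᵥ derivState z zd t)
    - ∫ s in (t - l)..t, derivState z zd s ⬝ᵥ R₁ *ᵥ derivState z zd s)
  + ((u - l) * (derivState z zd t ⬝ᵥ R₂ *ᵥ derivState z zd t)
    - ∫ s in (t - u)..(t - l), derivState z zd s ⬝ᵥ R₂ *ᵥ derivState z zd s)

lemma hasDerivAt_delayIntegrals (hz : ∀ t, HasDerivAt z (zd t) t) (l u t : ℝ) :
    HasDerivAt (delayIntegrals z l u) (delayIntegralsDeriv z zd l u t) t := by
  have hzc : Continuous z := continuous_iff_continuousAt.2 fun t => (hz t).continuousAt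
  have recent : HasDerivAt (fun t => ∫ s in (t - l)..t, z s) (z t - z (t - l)) t := by
    simpa only [sub_zero] using hasDerivAt_integral_window hzc 0 l t
  have past := hasDerivAt_integral_window hzc l u t
  refine hasDerivAt_pi.2 fun ⟨i, a⟩ => ?_
  fin_cases i
  · exact hasDerivAt_pi.1 (hz t) a
  · exact hasDerivAt_pi.1 recent a
  · exact hasDerivAt_pi.1 past a

lemma hasDerivAt_lyapunov (hz : ∀ t, HasDerivAt z (zd t) t) (hzd : Continuous zd) (hP : P.IsSymm)
    (Q₁ Q₂ : Matrix α α ℝ) (R₁ R₂ : Matrix (α ⊕ α) (α ⊕ α) ℝ) (l u t : ℝ) :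
    HasDerivAt (lyapunov z zd P Q₁ Q₂ R₁ R₂ l u) (lyapunovDeriv z zd P Q₁ Q₂ R₁ R₂ l u t) t := by
  have hzc : Continuous z := continuous_iff_continuousAt.2 fun t => (hz t).continuousAt
  have hω := continuous_derivState hzc hzd
  have hRecent₁ := hasDerivAt_integral_window (continuous_dotProduct_mulVec Q₁ hzc) 0 l t
  have hRecent₂ := hasDerivAt_integral_integral_window (continuous_dotProduct_mulVec R₁ hω) 0 l t
  simp only [sub_zero] at hRecent₁ hRecent₂
  exact ((((hasDerivAt_dotProduct_mulVec hP (hasDerivAt_delayIntegrals hz l u t)).add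
    hRecent₁).add
    (hasDerivAt_integral_window (continuous_dotProduct_mulVec Q₂ hzc) l u t)).add
    hRecent₂).add
    (hasDerivAt_integral_integral_window (continuous_dotProduct_mulVec R₂ hω) l u t)

lemma lyapunov_nonneg (hP : P.PosSemidef) (hQ₁ : Q₁.PosSemidef) (hQ₂ : Q₂.PosSemidef)
    (hR₁ : R₁.PosSemidef) (hR₂ : R₂.PosSemidef) (hl : 0 ≤ l) (hlu : l ≤ u)
    (z zd : ℝ → α → ℝ) (t : ℝ) : 0 ≤ lyapunov z zd P Q₁ Q₂ R₁ R₂ l u t := by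
  have hRecent := integral_integral_window_nonneg
    (fun s => hR₁.dotProduct_mulVec_nonneg (derivState z zd s)) le_rfl hl t
  rw [sub_zero] at hRecent
  exact add_nonneg (add_nonneg (add_nonneg (add_nonneg (hP.dotProduct_mulVec_nonneg _)
    (intervalIntegral.integral_nonneg (by linarith) fun s _ => hQ₁.dotProduct_mulVec_nonneg _))
    (intervalIntegral.integral_nonneg (by linarith) fun s _ => hQ₂.dotProduct_mulVec_nonneg _))
    hRecent)
    (integral_integral_window_nonneg (fun s => hR₂.dotProduct_mulVec_nonneg _) hl hlu t)

end Lyapunov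

/-! ### The quadratic form of the linear matrix inequality -/

section BlockMatrices

variable {m n N : ℕ}

lemma dotProduct_X1b_mulVec (τl : Fin m → ℝ)
    (Y : Fin 3 → Fin m → Fin (2 * N + 1) → Matrix (bg m n N) (ag m n) ℝ)
    (ζ : bg m n N → ℝ) (η : Fin m × kp m n N → ℝ) :
    ζ ⬝ᵥ X1b m n N τl Y *ᵥ η =
      ∑ k, τl k * ((ζ ᵥ* Yb m n N Y 0 k) ⬝ᵥ fun c => η (k, c)) := by
  rw [dotProduct_mulVec]
  simp only [dotProduct, vecMul, Fintype.sum_prod_type (α₁ := Fin m), X1b, Finset.mul_sum,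
    Finset.sum_mul]
  exact Finset.sum_congr rfl fun k _ => Finset.sum_congr rfl fun c _ =>
    Finset.sum_congr rfl fun p _ => by ring

lemma dotProduct_X23b_mulVec (τl τu τv : Fin m → ℝ)
    (Y : Fin 3 → Fin m → Fin (2 * N + 1) → Matrix (bg m n N) (ag m n) ℝ)
    (ζ : bg m n N → ℝ) (η : Fin m × kp m n N → ℝ) :
    ζ ⬝ᵥ X23b m n N τl τu τv Y *ᵥ η =
      ∑ k, ((τv k - τl k) * ((ζ ᵥ* Yb m n N Y 1 k) ⬝ᵥ fun c => η (k, c))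
        + (τu k - τv k) * ((ζ ᵥ* Yb m n N Y 2 k) ⬝ᵥ fun c => η (k, c))) := by
  rw [dotProduct_mulVec]
  simp only [dotProduct, vecMul, Fintype.sum_prod_type (α₁ := Fin m), X23b, Finset.mul_sum,
    Finset.sum_mul, ← Finset.sum_add_distrib]
  exact Finset.sum_congr rfl fun k _ => Finset.sum_congr rfl fun c _ =>
    Finset.sum_congr rfl fun p _ => by ring

lemma dotProduct_blockDiagonal_mulVec {κ ι β : Type*} [Fintype κ] [Fintype ι] [Fintype β]
    [DecidableEq κ] [DecidableEq ι] (S : κ → ι → Matrix β β ℝ) (η : κ × ι × β → ℝ) :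
    η ⬝ᵥ (of fun p c : κ × ι × β =>
        if p.1 = c.1 ∧ p.2.1 = c.2.1 then S p.1 p.2.1 p.2.2 c.2.2 else 0) *ᵥ η =
      ∑ k, ∑ j, (fun b => η (k, j, b)) ⬝ᵥ S k j *ᵥ fun b => η (k, j, b) := by
  simp only [dotProduct, mulVec, Fintype.sum_prod_type, of_apply]
  refine Finset.sum_congr rfl fun k _ => Finset.sum_congr rfl fun j _ =>
    Finset.sum_congr rfl fun b _ => congrArg (η (k, j, b) * ·) ?_
  rw [Fintype.sum_eq_single k (fun k' h => by simp [h.symm]),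
    Fintype.sum_eq_single j (fun j' h => by simp [h.symm])]
  simp

lemma dotProduct_RW1b_mulVec (τl : Fin m → ℝ)
    (R1 : Fin m → Matrix (ag m n ⊕ ag m n) (ag m n ⊕ ag m n) ℝ)
    (W1 : Fin m → Matrix (ag m n) (ag m n) ℝ) (η : Fin m × kp m n N → ℝ) :
    η ⬝ᵥ RW1b m n N τl R1 W1 *ᵥ η =
      ∑ k, τl k * legendreForm (R1 k + Wb m n (W1 k)) fun c => η (k, c) := by
  have RW1b_eq : RW1b m n N τl R1 W1 = of fun p c => if p.1 = c.1 ∧ p.2.1 = c.2.1 then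
      ((τl p.1 * (2 * ((p.2.1 : ℕ) : ℝ) + 1)) • (R1 p.1 + Wb m n (W1 p.1))) p.2.2 c.2.2 else 0 := by
    ext p c
    simp [RW1b]
  rw [RW1b_eq, dotProduct_blockDiagonal_mulVec fun k (j : Fin (N + 1)) =>
    (τl k * (2 * ((j : ℕ) : ℝ) + 1)) • (R1 k + Wb m n (W1 k))]
  simp only [legendreForm, Finset.mul_sum, smul_mulVec, dotProduct_smul, smul_eq_mul, mul_assoc]

lemma dotProduct_RW23b_mulVec (τl τu τv : Fin m → ℝ)
    (R2 : Fin m → Matrix (ag m n ⊕ ag m n) (ag m n ⊕ ag m n) ℝ)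
    (W2 W3 : Fin m → Matrix (ag m n) (ag m n) ℝ) (η : Fin m × kp m n N → ℝ) :
    η ⬝ᵥ RW23b m n N τl τu τv R2 W2 W3 *ᵥ η =
      ∑ k, ((τv k - τl k) * legendreForm (R2 k + Wb m n (W2 k)) (fun c => η (k, c))
        + (τu k - τv k) * legendreForm (R2 k + Wb m n (W3 k)) fun c => η (k, c)) := by
  have RW23b_eq : RW23b m n N τl τu τv R2 W2 W3 =
      RW1b m n N (τv - τl) R2 W2 + RW1b m n N (τu - τv) R2 W3 := by
    ext p c
    simp only [RW23b, RW1b, Matrix.add_apply, Pi.sub_apply]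
    split_ifs <;> ring
  rw [RW23b_eq, add_mulVec, dotProduct_add, dotProduct_RW1b_mulVec, dotProduct_RW1b_mulVec,
    ← Finset.sum_add_distrib]
  rfl

lemma Pi1_vertex_combination (τl τu : Fin m → ℝ) (k : Fin m) (v : ℝ) :
    (v - τl k) • Pi1 m n N τl τu (fun _ => τu k) k + (τu k - v) • Pi1 m n N τl τu (fun _ => τl k) k
      = (τu k - τl k) • Pi1 m n N τl τu (fun _ => v) k := by
  ext p c
  simp only [Pi1, Matrix.add_apply, Matrix.smul_apply, smul_eq_mul]
  split_ifs <;> ring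

lemma Mb_vertex_combination (τl τu : Fin m → ℝ) (x : Fin 3) (k : Fin m) (v : ℝ) :
    (v - τl k) • Mb m n N τl τu (fun _ => τu k) x k
      + (τu k - v) • Mb m n N τl τu (fun _ => τl k) x k
      = (τu k - τl k) • Mb m n N τl τu (fun _ => v) x k := by
  have coefM_vertex_combination : (v - τl k) * coefM m τl τu (fun _ => τu k) x k
      + (τu k - v) * coefM m τl τu (fun _ => τl k) x k
      = (τu k - τl k) * coefM m τl τu (fun _ => v) x k := by
    unfold coefM
    split_ifs <;> ring
  ext p ⟨j, i | i⟩ <;> simp only [Mb, Meven, Matrix.add_apply, Matrix.smul_apply, smul_eq_mul]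
  · ring
  · split_ifs
    · rw [← mul_assoc, ← mul_assoc, ← add_mul, coefM_vertex_combination, mul_assoc]
    · ring

end BlockMatrices

/-- The data of the criterion: the agent dynamics `A`, `B`, the feedback gain `K`, the coupling
weights, the delay bounds and the decision matrices. -/
structure ConsensusData (m n r N : ℕ) where
  A : Matrix (Fin n) (Fin n) ℝ
  adj : Fin m → Fin m → ℝ
  B : Matrix (Fin n) (Fin r) ℝ
  K : Matrix (Fin r) (Fin n) ℝ
  τl : Fin m → ℝ
  τu : Fin m → ℝ
  P : Fin m → Matrix (Fin 3 × ag m n) (Fin 3 × ag m n) ℝ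
  Q1 : Fin m → Matrix (ag m n) (ag m n) ℝ
  Q2 : Fin m → Matrix (ag m n) (ag m n) ℝ
  R1 : Fin m → Matrix (ag m n ⊕ ag m n) (ag m n ⊕ ag m n) ℝ
  R2 : Fin m → Matrix (ag m n ⊕ ag m n) (ag m n ⊕ ag m n) ℝ
  W1 : Fin m → Matrix (ag m n) (ag m n) ℝ
  W2 : Fin m → Matrix (ag m n) (ag m n) ℝ
  W3 : Fin m → Matrix (ag m n) (ag m n) ℝ
  Y : Fin 3 → Fin m → Fin (2 * N + 1) → Matrix (bg m n N) (ag m n) ℝ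

/-- The contribution `2 yᵀη - ηᵀ(ℐ_N ⊗ S)η` of one delay segment, with multiplier `y`, to the
quadratic form of the linear matrix inequality. -/
def segmentForm {N : ℕ} {β : Type*} [Fintype β] (S : Matrix β β ℝ) (y η : Fin (N + 1) × β → ℝ) :
    ℝ :=
  2 * (y ⬝ᵥ η) - legendreForm S η

namespace ConsensusData

variable {m n r N : ℕ} (D : ConsensusData m n r N)

/-- The matrix of the linear matrix inequality at the delay vector `τv`. -/
def lmi (τv : Fin m → ℝ) :
    Matrix (bg m n N ⊕ ((Fin m × kp m n N) ⊕ (Fin m × kp m n N)))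
      (bg m n N ⊕ ((Fin m × kp m n N) ⊕ (Fin m × kp m n N))) ℝ :=
  LMImat m n r N D.A D.adj D.B D.K D.τl D.τu τv D.P D.Q1 D.Q2 D.R1 D.R2 D.W1 D.W2 D.W3 D.Y

/-- The `k`-th summand of the quadratic form of `Π̄` at `ζ`. It depends on the delays only
through the value `v` of the `k`-th one. -/
def stateForm (ζ : bg m n N → ℝ) (k : Fin m) (v : ℝ) : ℝ :=
  2 * ((ζ ᵥ* Pi2 m n r N D.A D.adj D.B D.K k) ⬝ᵥ
      D.P k *ᵥ (ζ ᵥ* Pi1 m n N D.τl D.τu (fun _ => v) k))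
  + (ζ ᵥ* eB m n N 1) ⬝ᵥ (D.Q1 k + D.W1 k) *ᵥ (ζ ᵥ* eB m n N 1)
  + (ζ ᵥ* eB m n N ((k : ℕ) + 2)) ⬝ᵥ
      (D.Q2 k - D.Q1 k + D.W2 k - D.W1 k) *ᵥ (ζ ᵥ* eB m n N ((k : ℕ) + 2))
  + (ζ ᵥ* eB m n N (2 * m + (k : ℕ) + 2)) ⬝ᵥ
      (D.W3 k - D.W2 k) *ᵥ (ζ ᵥ* eB m n N (2 * m + (k : ℕ) + 2))
  - (ζ ᵥ* eB m n N (m + (k : ℕ) + 2)) ⬝ᵥ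
      (D.Q2 k + D.W3 k) *ᵥ (ζ ᵥ* eB m n N (m + (k : ℕ) + 2))
  + (ζ ᵥ* Pi3 m n r N D.A D.adj D.B D.K) ⬝ᵥ
      (D.τl k • D.R1 k + (D.τu k - D.τl k) • D.R2 k) *ᵥ (ζ ᵥ* Pi3 m n r N D.A D.adj D.B D.K)
  + 2 * ((ζ ᵥ* Yb m n N D.Y 0 k) ⬝ᵥ (ζ ᵥ* Mb m n N D.τl D.τu (fun _ => v) 0 k)
    + (ζ ᵥ* Yb m n N D.Y 1 k) ⬝ᵥ (ζ ᵥ* Mb m n N D.τl D.τu (fun _ => v) 1 k)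
    + (ζ ᵥ* Yb m n N D.Y 2 k) ⬝ᵥ (ζ ᵥ* Mb m n N D.τl D.τu (fun _ => v) 2 k))

/-- The `k`-th summand of the quadratic form of `lmi` at `(ζ, η₁, η₂)`, with delay value `v`. -/
def agentForm (ζ : bg m n N → ℝ) (k : Fin m) (v : ℝ) (η₁ η₂ : kp m n N → ℝ) : ℝ :=
  D.stateForm ζ k v
  + D.τl k * segmentForm (D.R1 k + Wb m n (D.W1 k)) (ζ ᵥ* Yb m n N D.Y 0 k) η₁
  + (v - D.τl k) * segmentForm (D.R2 k + Wb m n (D.W2 k)) (ζ ᵥ* Yb m n N D.Y 1 k) η₂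
  + (D.τu k - v) * segmentForm (D.R2 k + Wb m n (D.W3 k)) (ζ ᵥ* Yb m n N D.Y 2 k) η₂

lemma dotProduct_PibarT_mulVec (τv : Fin m → ℝ) (ζ : bg m n N → ℝ) :
    ζ ⬝ᵥ (PibarT m n r N D.A D.adj D.B D.K D.τl D.τu τv
        D.P D.Q1 D.Q2 D.R1 D.R2 D.W1 D.W2 D.W3 D.Y) *ᵥ ζ =
      ∑ k, D.stateForm ζ k (τv k) := by
  unfold PibarT
  rw [sum_mulVec, dotProduct_sum]
  refine Finset.sum_congr rfl fun k _ => ?_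
  simp only [add_mulVec (_ : Matrix (bg m n N) (bg m n N) ℝ),
    sub_mulVec (_ : Matrix (bg m n N) (bg m n N) ℝ), dotProduct_add, dotProduct_sub,
    dotProduct_symM_mulVec, dotProduct_mul_mul_transpose_mulVec]
  simp only [dotProduct_mul_transpose_mulVec]
  rfl

lemma dotProduct_lmi_mulVec_eq_blocks (τv : Fin m → ℝ) (ζ : bg m n N → ℝ)
    (η₁ η₂ : Fin m × kp m n N → ℝ) :
    Sum.elim ζ (Sum.elim η₁ η₂) ⬝ᵥ D.lmi τv *ᵥ Sum.elim ζ (Sum.elim η₁ η₂) =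
      ∑ k, D.stateForm ζ k (τv k)
      + 2 * (ζ ⬝ᵥ X1b m n N D.τl D.Y *ᵥ η₁) + 2 * (ζ ⬝ᵥ X23b m n N D.τl D.τu τv D.Y *ᵥ η₂)
      - η₁ ⬝ᵥ RW1b m n N D.τl D.R1 D.W1 *ᵥ η₁
      - η₂ ⬝ᵥ RW23b m n N D.τl D.τu τv D.R2 D.W2 D.W3 *ᵥ η₂ := by
  have upper : (of fun p c => Sum.elim (X1b m n N D.τl D.Y p) (X23b m n N D.τl D.τu τv D.Y p) c) =
      fromCols (X1b m n N D.τl D.Y) (X23b m n N D.τl D.τu τv D.Y) := by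
    ext p (c | c) <;> rfl
  have lower : (of fun p c => Sum.elim (X1b m n N D.τl D.Y c) (X23b m n N D.τl D.τu τv D.Y c) p) =
      fromRows (X1b m n N D.τl D.Y)ᵀ (X23b m n N D.τl D.τu τv D.Y)ᵀ := by
    ext (p | p) c <;> rfl
  rw [lmi, LMImat, upper, lower]
  simp only [fromBlocks_mulVec, Sum.elim_comp_inl, Sum.elim_comp_inr, fromCols_mulVec_sumElim,
    fromRows_mulVec, sumElim_dotProduct_sumElim, neg_mulVec, zero_mulVec, dotProduct_add,
    dotProduct_neg, add_zero, zero_add, mulVec_transpose, dotProduct_PibarT_mulVec]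
  rw [dotProduct_mulVec ζ (X1b m n N D.τl D.Y), dotProduct_mulVec ζ (X23b m n N D.τl D.τu τv D.Y),
    dotProduct_comm η₁, dotProduct_comm η₂]
  ring

lemma dotProduct_lmi_mulVec (τv : Fin m → ℝ) (ζ : bg m n N → ℝ) (η₁ η₂ : Fin m × kp m n N → ℝ) :
    Sum.elim ζ (Sum.elim η₁ η₂) ⬝ᵥ D.lmi τv *ᵥ Sum.elim ζ (Sum.elim η₁ η₂) =
      ∑ k, D.agentForm ζ k (τv k) (fun c => η₁ (k, c)) fun c => η₂ (k, c) := by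
  rw [dotProduct_lmi_mulVec_eq_blocks, dotProduct_X1b_mulVec, dotProduct_X23b_mulVec,
    dotProduct_RW1b_mulVec, dotProduct_RW23b_mulVec, Finset.mul_sum, Finset.mul_sum,
    ← Finset.sum_add_distrib, ← Finset.sum_add_distrib, ← Finset.sum_sub_distrib,
    ← Finset.sum_sub_distrib]
  refine Finset.sum_congr rfl fun k _ => ?_
  rw [agentForm, segmentForm, segmentForm, segmentForm]
  ring

lemma stateForm_vertex_combination (ζ : bg m n N → ℝ) (k : Fin m) (v : ℝ) :
    (v - D.τl k) * D.stateForm ζ k (D.τu k) + (D.τu k - v) * D.stateForm ζ k (D.τl k)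
      = (D.τu k - D.τl k) * D.stateForm ζ k v := by
  have pair_Pi1 (y : Fin 3 × ag m n → ℝ) := congrArg (fun M => y ⬝ᵥ D.P k *ᵥ (ζ ᵥ* M))
    (Pi1_vertex_combination (n := n) (N := N) D.τl D.τu k v)
  have pair_Mb (y : kp m n N → ℝ) (x : Fin 3) := congrArg (fun M => y ⬝ᵥ (ζ ᵥ* M))
    (Mb_vertex_combination (n := n) (N := N) D.τl D.τu x k v)
  simp only [vecMul_add, vecMul_smul, mulVec_add, mulVec_smul, dotProduct_add, dotProduct_smul,
    smul_eq_mul] at pair_Pi1 pair_Mb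
  unfold stateForm
  linear_combination 2 * pair_Pi1 (ζ ᵥ* Pi2 m n r N D.A D.adj D.B D.K k)
    + 2 * pair_Mb (ζ ᵥ* Yb m n N D.Y 0 k) 0 + 2 * pair_Mb (ζ ᵥ* Yb m n N D.Y 1 k) 1
    + 2 * pair_Mb (ζ ᵥ* Yb m n N D.Y 2 k) 2

/-- The middle segment has length `0` at the lower vertex, the oldest one at the upper vertex, so
each vertex may be tested with the Legendre coefficients of its own segment. -/
lemma agentForm_vertex_combination (ζ : bg m n N → ℝ) (k : Fin m) (v : ℝ)
    (η₁ η₂ η₃ : kp m n N → ℝ) :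
    (v - D.τl k) * D.agentForm ζ k (D.τu k) η₁ η₂ + (D.τu k - v) * D.agentForm ζ k (D.τl k) η₁ η₃ =
      (D.τu k - D.τl k) * (D.stateForm ζ k v
        + D.τl k * segmentForm (D.R1 k + Wb m n (D.W1 k)) (ζ ᵥ* Yb m n N D.Y 0 k) η₁
        + (v - D.τl k) * segmentForm (D.R2 k + Wb m n (D.W2 k)) (ζ ᵥ* Yb m n N D.Y 1 k) η₂
        + (D.τu k - v) * segmentForm (D.R2 k + Wb m n (D.W3 k)) (ζ ᵥ* Yb m n N D.Y 2 k) η₃) := by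
  unfold agentForm
  linear_combination D.stateForm_vertex_combination ζ k v

end ConsensusData

/-! ### The augmented state along a trajectory -/

section AugmentedState

variable {m n N : ℕ}

lemma vecMul_eB (ζ : bg m n N → ℝ) (f : Fin (1 + (3 + 3 * N) * m)) {i : ℕ} (hi : i = f + 1) :
    ζ ᵥ* eB m n N i = fun a => ζ (f, a) := by
  subst hi
  funext a
  have selector (p : bg m n N) : eB m n N (f + 1) p a = if p = (f, a) then 1 else 0 := by
    simp only [eB, add_left_inj, Fin.val_inj, Prod.ext_iff]
  simp only [vecMul, dotProduct, selector, mul_ite, mul_one, mul_zero, Finset.sum_ite_eq',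
    Finset.mem_univ, if_true]

/-- The left endpoints of the segments `[t - τl, t]`, `[t - τ, t - τl]`, `[t - τu, t - τ]` of agent
`k`. Their lengths are given by `coefM`. -/
def segStart (τl τu τ : Fin m → ℝ) (t : ℝ) (x : Fin 3) (k : Fin m) : ℝ :=
  ![t - τl k, t - τ k, t - τu k] x

/-- The right endpoints of the segments of `segStart`. -/
def segEnd (τl τ : Fin m → ℝ) (t : ℝ) (x : Fin 3) (k : Fin m) : ℝ :=
  ![t, t - τl k, t - τ k] x

lemma segStart_add_coefM (τl τu τ : Fin m → ℝ) (t : ℝ) (x : Fin 3) (k : Fin m) :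
    segStart τl τu τ t x k + coefM m τl τu τ x k = segEnd τl τ t x k := by
  fin_cases x <;> simp [segStart, segEnd, coefM]

/-- The `q`-th block of agent `k` in the augmented state: the three delayed states, followed by the
moments of order less than `N` on the three segments. -/
noncomputable def augmentedBlock (N : ℕ) (z : ℝ → ag m n → ℝ) (τl τu τ : Fin m → ℝ) (t : ℝ)
    (q : ℕ) (k : Fin m) : ag m n → ℝ :=
  if q = 0 then z (t - τl k) else if q = 1 then z (t - τu k) else if q = 2 then z (t - τ k)
  else if q < 3 + N then segMoment z (segStart τl τu τ t 0 k) (coefM m τl τu τ 0 k) (q - 3)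
  else if q < 3 + 2 * N then
    segMoment z (segStart τl τu τ t 1 k) (coefM m τl τu τ 1 k) (q - 3 - N)
  else segMoment z (segStart τl τu τ t 2 k) (coefM m τl τu τ 2 k) (q - 3 - 2 * N)

/-- The augmented vector `ζ(t)` when the current delays are `τ`. -/
noncomputable def augmentedState (N : ℕ) (z : ℝ → ag m n → ℝ) (τl τu τ : Fin m → ℝ) (t : ℝ) :
    bg m n N → ℝ := fun p =>
  Fin.addCases (motive := fun _ => ag m n → ℝ) (fun _ => z t)
    (fun f => augmentedBlock N z τl τu τ t (finProdFinEquiv.symm f).1 (finProdFinEquiv.symm f).2)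
    p.1 p.2

variable (z : ℝ → ag m n → ℝ) (τl τu τ : Fin m → ℝ) (t : ℝ)

lemma augmentedState_vecMul_eB_one : augmentedState N z τl τu τ t ᵥ* eB m n N 1 = z t := by
  rw [vecMul_eB (i := 1) _ (Fin.castAdd _ 0) rfl]
  funext a
  rw [augmentedState, Fin.addCases_left]

lemma augmentedState_vecMul_eB {q : ℕ} (hq : q < 3 + 3 * N) (k : Fin m) :
    augmentedState N z τl τu τ t ᵥ* eB m n N (q * m + (k : ℕ) + 2) =
      augmentedBlock N z τl τu τ t q k := by
  have index : q * m + (k : ℕ) + 2 = Fin.natAdd 1 (finProdFinEquiv (⟨q, hq⟩, k)) + 1 := by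
    simp only [Fin.val_natAdd, finProdFinEquiv_apply_val]
    ring
  rw [vecMul_eB _ _ index]
  funext a
  rw [augmentedState, Fin.addCases_right, Equiv.symm_apply_apply]

lemma augmentedState_vecMul_eB_lower (k : Fin m) :
    augmentedState N z τl τu τ t ᵥ* eB m n N ((k : ℕ) + 2) = z (t - τl k) := by
  simpa [augmentedBlock] using
    augmentedState_vecMul_eB (N := N) z τl τu τ t (q := 0) (by lia) k

lemma augmentedState_vecMul_eB_upper (k : Fin m) :
    augmentedState N z τl τu τ t ᵥ* eB m n N (m + (k : ℕ) + 2) = z (t - τu k) := by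
  simpa [augmentedBlock] using
    augmentedState_vecMul_eB (N := N) z τl τu τ t (q := 1) (by lia) k

lemma augmentedState_vecMul_eB_delay (k : Fin m) :
    augmentedState N z τl τu τ t ᵥ* eB m n N (2 * m + (k : ℕ) + 2) = z (t - τ k) := by
  simpa [augmentedBlock] using
    augmentedState_vecMul_eB (N := N) z τl τu τ t (q := 2) (by lia) k

lemma augmentedState_vecMul_eEven (x : Fin 3) (k : Fin m) {i : ℕ} (hi : i < N) :
    augmentedState N z τl τu τ t ᵥ* eEven m n N x k i =
      segMoment z (segStart τl τu τ t x k) (coefM m τl τu τ x k) i := by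
  fin_cases x
  · simp only [eEven, Fin.zero_eta, if_true]
    rw [augmentedState_vecMul_eB _ _ _ _ _ (by lia), augmentedBlock, if_neg (by lia),
      if_neg (by lia), if_neg (by lia), if_pos (by lia)]
    congr 1
    lia
  · simp only [eEven, Fin.mk_one, one_ne_zero, if_false, if_true]
    rw [augmentedState_vecMul_eB _ _ _ _ _ (by lia), augmentedBlock, if_neg (by lia),
      if_neg (by lia), if_neg (by lia), if_neg (by lia), if_pos (by lia)]
    congr 1
    lia
  · simp only [eEven, Fin.reduceFinMk, Fin.reduceEq, if_false]
    rw [augmentedState_vecMul_eB _ _ _ _ _ (by lia), augmentedBlock, if_neg (by lia),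
      if_neg (by lia), if_neg (by lia), if_neg (by lia), if_neg (by lia)]
    congr 1
    lia

lemma augmentedState_vecMul_rho (x : Fin 3) (k : Fin m) {i : ℕ} (hi : i ≤ N) :
    augmentedState N z τl τu τ t ᵥ* rho m n N x k i =
      z (segEnd τl τ t x k) - if i = 0 then z (segStart τl τu τ t x k) else
        (i : ℝ) • segMoment z (segStart τl τu τ t x k) (coefM m τl τu τ x k) (i - 1) := by
  rcases i with _ | i
  · fin_cases x <;> simp [rho, segStart, segEnd, vecMul_sub, augmentedState_vecMul_eB_one,
      augmentedState_vecMul_eB_lower, augmentedState_vecMul_eB_upper,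
      augmentedState_vecMul_eB_delay]
  · rw [if_neg i.succ_ne_zero, Nat.add_sub_cancel, ← augmentedState_vecMul_eEven _ _ _ _ _ x k hi]
    have order : 2 + (i + 1) = 3 + i := by ring
    fin_cases x <;> simp [rho, order, segEnd, eEven, vecMul_sub, vecMul_smul,
      augmentedState_vecMul_eB_one, augmentedState_vecMul_eB_lower, augmentedState_vecMul_eB_delay]

variable {z} {zd : ℝ → ag m n → ℝ}

lemma augmentedState_vecMul_Modd (hz : ∀ t, HasDerivAt z (zd t) t) (hzd : Continuous zd)
    (x : Fin 3) (k : Fin m) {j : ℕ} (hj : j ≤ N) :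
    augmentedState N z τl τu τ t ᵥ* Modd m n N x k (j + 1) =
      coefM m τl τu τ x k •
        legendreCoeff zd (segStart τl τu τ t x k) (coefM m τl τu τ x k) j := by
  rw [Modd, vecMul_sum, smul_legendreCoeff_deriv hz hzd, segStart_add_coefM]
  refine Finset.sum_congr rfl fun i hi => ?_
  rw [vecMul_smul, augmentedState_vecMul_rho _ _ _ _ _ _ _
    (by have := Finset.mem_range.1 hi; lia)]

lemma augmentedState_vecMul_Meven (hz : Continuous z) (x : Fin 3) (k : Fin m) {j : ℕ}
    (hj : j < N) :
    augmentedState N z τl τu τ t ᵥ* Meven m n N τl τu τ x k (j + 1) =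
      coefM m τl τu τ x k •
        legendreCoeff z (segStart τl τu τ t x k) (coefM m τl τu τ x k) j := by
  rw [Meven, vecMul_smul, vecMul_sum, legendreCoeff_eq_sum_segMoment hz]
  refine congrArg _ (Finset.sum_congr rfl fun i hi => ?_)
  rw [vecMul_smul, augmentedState_vecMul_eEven _ _ _ _ _ _ _
    (by have := Finset.mem_range.1 hi; lia)]

/-- The Legendre coefficients of `(ż, z)` on the segment `x` of agent `k`. -/
noncomputable def segmentStack (N : ℕ) (z zd : ℝ → ag m n → ℝ) (τl τu τ : Fin m → ℝ) (t : ℝ)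
    (x : Fin 3) (k : Fin m) : kp m n N → ℝ :=
  legendreStack N (derivState z zd) (segStart τl τu τ t x k) (coefM m τl τu τ x k)

lemma vecMul_Yb_last (Y : Fin 3 → Fin m → Fin (2 * N + 1) → Matrix (bg m n N) (ag m n) ℝ)
    (ζ : bg m n N → ℝ) (x : Fin 3) (k : Fin m) {j : Fin (N + 1)} (hj : ¬ (j : ℕ) < N)
    (a : ag m n) : (ζ ᵥ* Yb m n N Y x k) (j, Sum.inr a) = 0 := by
  have column_zero (p : bg m n N) : Yb m n N Y x k p (j, Sum.inr a) = 0 := dif_neg (by simp; lia)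
  simp only [vecMul, dotProduct, column_zero, mul_zero, Finset.sum_const_zero]

/-- `M̄` omits the top coefficient of `z`, which `Ȳ` does not test. -/
lemma vecMul_Yb_dotProduct_vecMul_Mb (hz : ∀ t, HasDerivAt z (zd t) t) (hzd : Continuous zd)
    (Y : Fin 3 → Fin m → Fin (2 * N + 1) → Matrix (bg m n N) (ag m n) ℝ)
    (ζ : bg m n N → ℝ) (x : Fin 3) (k : Fin m) :
    (ζ ᵥ* Yb m n N Y x k) ⬝ᵥ (augmentedState N z τl τu τ t ᵥ* Mb m n N τl τu τ x k) =
      coefM m τl τu τ x k *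
        ((ζ ᵥ* Yb m n N Y x k) ⬝ᵥ segmentStack N z zd τl τu τ t x k) := by
  have hzc : Continuous z := continuous_iff_continuousAt.2 fun t => (hz t).continuousAt
  rw [← smul_eq_mul (coefM m τl τu τ x k), ← dotProduct_smul]
  refine Finset.sum_congr rfl fun ⟨j, c⟩ _ => ?_
  simp only [segmentStack, legendreStack, Pi.smul_apply, legendreCoeff_derivState hzc hzd]
  rcases c with a | a
  · exact congrArg _ (congrFun (augmentedState_vecMul_Modd τl τu τ t hz hzd x k
      (Nat.lt_succ_iff.1 j.isLt)) a)
  · by_cases hj : (j : ℕ) < N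
    · refine congrArg _ (Eq.trans ?_
        (congrFun (augmentedState_vecMul_Meven τl τu τ t hzc x k hj) a))
      simp only [vecMul, dotProduct, Mb, hj, if_true]
    · rw [vecMul_Yb_last Y ζ x k hj, zero_mul, zero_mul]

lemma augmentedState_vecMul_Pi1 (hN : 1 ≤ N) (hz : Continuous z) (k : Fin m) :
    augmentedState N z τl τu τ t ᵥ* Pi1 m n N τl τu τ k = delayIntegrals z (τl k) (τu k) t := by
  have moment (x : Fin 3) := augmentedState_vecMul_eEven (N := N) z τl τu τ t x k hN
  have segment_integral (x : Fin 3) : coefM m τl τu τ x k • (augmentedState N z τl τu τ t ᵥ*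
      eEven m n N x k 0) = ∫ s in (segStart τl τu τ t x k)..(segEnd τl τ t x k), z s := by
    rw [moment, smul_segMoment_zero z (segStart_add_coefM τl τu τ t x k)]
  have split : (∫ s in (t - τ k)..(t - τl k), z s) + (∫ s in (t - τu k)..(t - τ k), z s) =
      ∫ s in (t - τu k)..(t - τl k), z s := by
    rw [add_comm, intervalIntegral.integral_add_adjacent_intervals (hz.intervalIntegrable _ _)
      (hz.intervalIntegrable _ _)]
  have column_one (a : ag m n) : (augmentedState N z τl τu τ t ᵥ* Pi1 m n N τl τu τ k) (1, a) =
      (augmentedState N z τl τu τ t ᵥ* (coefM m τl τu τ 0 k • eEven m n N 0 k 0)) a := rfl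
  have column_two (a : ag m n) : (augmentedState N z τl τu τ t ᵥ* Pi1 m n N τl τu τ k) (2, a) =
      (augmentedState N z τl τu τ t ᵥ* (coefM m τl τu τ 1 k • eEven m n N 1 k 0 +
        coefM m τl τu τ 2 k • eEven m n N 2 k 0)) a := rfl
  funext ⟨i, a⟩
  fin_cases i
  · exact congrFun (augmentedState_vecMul_eB_one z τl τu τ t) a
  · refine (column_one a).trans (congrFun ?_ a)
    rw [vecMul_smul]
    exact segment_integral 0
  · refine (column_two a).trans (congrFun ?_ a)
    rw [vecMul_add, vecMul_smul, vecMul_smul, segment_integral, segment_integral]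
    exact split

end AugmentedState

section Dynamics

variable {m n r N : ℕ} {A : Matrix (Fin n) (Fin n) ℝ} {adj : Fin m → Fin m → ℝ}
  {B : Matrix (Fin n) (Fin r) ℝ} {K : Matrix (Fin r) (Fin n) ℝ} {z zd : ℝ → ag m n → ℝ}
  {τl τu τ : Fin m → ℝ} {t : ℝ}

lemma augmentedState_vecMul_dynRow
    (hzd : zd t = Abar m n A *ᵥ z t - ∑ k, Bbar m n r adj B K k *ᵥ z (t - τ k)) :
    augmentedState N z τl τu τ t ᵥ* dynRow m n r N A adj B K = zd t := by
  rw [hzd, dynRow, vecMul_sub, vecMul_sum, ← vecMul_vecMul, augmentedState_vecMul_eB_one,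
    vecMul_transpose]
  refine congrArg _ (Finset.sum_congr rfl fun k _ => ?_)
  rw [← vecMul_vecMul, augmentedState_vecMul_eB_delay, vecMul_transpose]

lemma augmentedState_vecMul_Pi2
    (hzd : augmentedState N z τl τu τ t ᵥ* dynRow m n r N A adj B K = zd t) (k : Fin m) :
    augmentedState N z τl τu τ t ᵥ* Pi2 m n r N A adj B K k =
      delayIntegralsDeriv z zd (τl k) (τu k) t := by
  have column_one (a : ag m n) :
      (augmentedState N z τl τu τ t ᵥ* Pi2 m n r N A adj B K k) (1, a) =
        (augmentedState N z τl τu τ t ᵥ* (eB m n N 1 - eB m n N ((k : ℕ) + 2))) a := rfl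
  have column_two (a : ag m n) :
      (augmentedState N z τl τu τ t ᵥ* Pi2 m n r N A adj B K k) (2, a) =
        (augmentedState N z τl τu τ t ᵥ* (eB m n N ((k : ℕ) + 2) -
          eB m n N (m + (k : ℕ) + 2))) a := rfl
  funext ⟨i, a⟩
  fin_cases i
  · exact congrFun hzd a
  · refine (column_one a).trans (congrFun ?_ a)
    rw [vecMul_sub, augmentedState_vecMul_eB_one, augmentedState_vecMul_eB_lower]
    rfl
  · refine (column_two a).trans (congrFun ?_ a)
    rw [vecMul_sub, augmentedState_vecMul_eB_lower, augmentedState_vecMul_eB_upper]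
    rfl

lemma augmentedState_vecMul_Pi3
    (hzd : augmentedState N z τl τu τ t ᵥ* dynRow m n r N A adj B K = zd t) :
    augmentedState N z τl τu τ t ᵥ* Pi3 m n r N A adj B K = derivState z zd t := by
  funext c
  rcases c with a | a
  · exact congrFun hzd a
  · exact congrFun (augmentedState_vecMul_eB_one z τl τu τ t) a

end Dynamics

/-! ### Decay of the Lyapunov–Krasovskii functional -/

lemma segmentForm_neg {N : ℕ} {β : Type*} [Fintype β] (S : Matrix β β ℝ)
    (y η : Fin (N + 1) × β → ℝ) :
    segmentForm S y (-η) = -(2 * (y ⬝ᵥ η)) - legendreForm S η := by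
  rw [segmentForm, legendreForm_neg, dotProduct_neg, mul_neg]

lemma le_or_le_of_add_mul_le {a b x y w : ℝ} (ha : 0 ≤ a) (hb : 0 ≤ b) (hab : 0 < a + b)
    (h : (a + b) * x ≤ a * y + b * w) : x ≤ y ∨ x ≤ w := by
  by_contra! hlt
  nlinarith [mul_lt_mul_of_pos_left (max_lt hlt.1 hlt.2) hab,
    mul_le_mul_of_nonneg_left (le_max_left y w) ha, mul_le_mul_of_nonneg_left (le_max_right y w) hb]

namespace ConsensusData

variable {m n r N : ℕ} {D : ConsensusData m n r N}

/-- The matrix inequalities of the criterion: positivity of the functional and of the modified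
integral terms, and negative definiteness of `lmi` at the vertices of the box of delays. -/
structure IsFeasible (D : ConsensusData m n r N) : Prop where
  posSemidef_P : ∀ k, (D.P k).PosSemidef
  posSemidef_Q1 : ∀ k, (D.Q1 k).PosSemidef
  posSemidef_Q2 : ∀ k, (D.Q2 k).PosSemidef
  posSemidef_R1 : ∀ k, (D.R1 k).PosSemidef
  posSemidef_R2 : ∀ k, (D.R2 k).PosSemidef
  isSymm_W1 : ∀ k, (D.W1 k).IsSymm
  isSymm_W2 : ∀ k, (D.W2 k).IsSymm
  isSymm_W3 : ∀ k, (D.W3 k).IsSymm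
  posSemidef_R1_add_W1 : ∀ k, (D.R1 k + Wb m n (D.W1 k)).PosSemidef
  posSemidef_R2_add_W2 : ∀ k, (D.R2 k + Wb m n (D.W2 k)).PosSemidef
  posSemidef_R2_add_W3 : ∀ k, (D.R2 k + Wb m n (D.W3 k)).PosSemidef
  posDef_neg_lmi : ∀ τv : Fin m → ℝ, (∀ k, τv k = D.τl k ∨ τv k = D.τu k) →
    (-(D.lmi τv)).PosDef

/-- `z` is a solution, with continuous velocity `zd`, of the delayed error dynamics
`ż(t) = Ā z(t) - ∑ B̄_k z(t - τ_k(t))` for delays `τ` within the bounds of `D`. -/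
structure IsErrorTrajectory (D : ConsensusData m n r N) (τ : Fin m → ℝ → ℝ)
    (z zd : ℝ → ag m n → ℝ) : Prop where
  lower_nonneg : ∀ k, 0 ≤ D.τl k
  lower_le : ∀ k t, D.τl k ≤ τ k t
  le_upper : ∀ k t, τ k t ≤ D.τu k
  hasDerivAt : ∀ t, HasDerivAt z (zd t) t
  continuous_velocity : Continuous zd
  velocity_eq : ∀ t, zd t =
    Abar m n D.A *ᵥ z t - ∑ k, Bbar m n r D.adj D.B D.K k *ᵥ z (t - τ k t)

/-- The summand of agent `k` in the Lyapunov–Krasovskii functional. -/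
noncomputable def agentLyapunov (D : ConsensusData m n r N) (z zd : ℝ → ag m n → ℝ) (k : Fin m)
    (t : ℝ) : ℝ :=
  lyapunov z zd (D.P k) (D.Q1 k) (D.Q2 k) (D.R1 k) (D.R2 k) (D.τl k) (D.τu k) t

/-- The derivative of `agentLyapunov`. -/
noncomputable def agentLyapunovDeriv (D : ConsensusData m n r N) (z zd : ℝ → ag m n → ℝ)
    (k : Fin m) (t : ℝ) : ℝ :=
  lyapunovDeriv z zd (D.P k) (D.Q1 k) (D.Q2 k) (D.R1 k) (D.R2 k) (D.τl k) (D.τu k) t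

/-- The augmented vector `ζ(t)` along a trajectory. -/
noncomputable def stateAt (D : ConsensusData m n r N) (τ : Fin m → ℝ → ℝ) (z : ℝ → ag m n → ℝ)
    (t : ℝ) : bg m n N → ℝ :=
  augmentedState N z D.τl D.τu (fun k => τ k t) t

/-- The Legendre coefficients of `(ż, z)` on the delay segment `x` of agent `k` at time `t`. -/
noncomputable def stackAt (D : ConsensusData m n r N) (τ : Fin m → ℝ → ℝ)
    (z zd : ℝ → ag m n → ℝ) (t : ℝ) (x : Fin 3) (k : Fin m) : kp m n N → ℝ :=
  segmentStack N z zd D.τl D.τu (fun k => τ k t) t x k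

variable {τ : Fin m → ℝ → ℝ} {z zd : ℝ → ag m n → ℝ}

lemma IsErrorTrajectory.continuous (hz : D.IsErrorTrajectory τ z zd) : Continuous z :=
  continuous_iff_continuousAt.2 fun t => (hz.hasDerivAt t).continuousAt

lemma IsErrorTrajectory.stateAt_vecMul_dynRow (hz : D.IsErrorTrajectory τ z zd) (t : ℝ) :
    D.stateAt τ z t ᵥ* dynRow m n r N D.A D.adj D.B D.K = zd t :=
  augmentedState_vecMul_dynRow (hz.velocity_eq t)

lemma IsErrorTrajectory.stateForm_stateAt (hz : D.IsErrorTrajectory τ z zd) (hN : 1 ≤ N)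
    (k : Fin m) (t : ℝ) :
    D.stateForm (D.stateAt τ z t) k (τ k t) =
      2 * (delayIntegralsDeriv z zd (D.τl k) (D.τu k) t ⬝ᵥ
        D.P k *ᵥ delayIntegrals z (D.τl k) (D.τu k) t)
      + z t ⬝ᵥ (D.Q1 k + D.W1 k) *ᵥ z t
      + z (t - D.τl k) ⬝ᵥ (D.Q2 k - D.Q1 k + D.W2 k - D.W1 k) *ᵥ z (t - D.τl k)
      + z (t - τ k t) ⬝ᵥ (D.W3 k - D.W2 k) *ᵥ z (t - τ k t)
      - z (t - D.τu k) ⬝ᵥ (D.Q2 k + D.W3 k) *ᵥ z (t - D.τu k)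
      + derivState z zd t ⬝ᵥ (D.τl k • D.R1 k + (D.τu k - D.τl k) • D.R2 k) *ᵥ derivState z zd t
      + 2 * (D.τl k * ((D.stateAt τ z t ᵥ* Yb m n N D.Y 0 k) ⬝ᵥ D.stackAt τ z zd t 0 k)
        + (τ k t - D.τl k) * ((D.stateAt τ z t ᵥ* Yb m n N D.Y 1 k) ⬝ᵥ D.stackAt τ z zd t 1 k)
        + (D.τu k - τ k t) *
          ((D.stateAt τ z t ᵥ* Yb m n N D.Y 2 k) ⬝ᵥ D.stackAt τ z zd t 2 k)) := by
  have hPi1 : D.stateAt τ z t ᵥ* Pi1 m n N D.τl D.τu (fun _ => τ k t) k = _ :=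
    augmentedState_vecMul_Pi1 D.τl D.τu (fun k => τ k t) t hN hz.continuous k
  have hMb (x : Fin 3) : (D.stateAt τ z t ᵥ* Yb m n N D.Y x k) ⬝ᵥ
      (D.stateAt τ z t ᵥ* Mb m n N D.τl D.τu (fun _ => τ k t) x k) = _ :=
    vecMul_Yb_dotProduct_vecMul_Mb D.τl D.τu (fun k => τ k t) t hz.hasDerivAt
      hz.continuous_velocity D.Y (D.stateAt τ z t) x k
  have hdyn := hz.stateAt_vecMul_dynRow t
  rw [stateForm, hPi1, hMb, hMb, hMb, stateAt, augmentedState_vecMul_Pi2 hdyn,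
    augmentedState_vecMul_Pi3 hdyn, augmentedState_vecMul_eB_one, augmentedState_vecMul_eB_lower,
    augmentedState_vecMul_eB_delay, augmentedState_vecMul_eB_upper]
  rfl

lemma sum_mul_legendreForm_stackAt_le (hD : D.IsFeasible) (hz : D.IsErrorTrajectory τ z zd)
    (k : Fin m) (t : ℝ) :
    D.τl k * legendreForm (D.R1 k + Wb m n (D.W1 k)) (D.stackAt τ z zd t 0 k)
      + (τ k t - D.τl k) * legendreForm (D.R2 k + Wb m n (D.W2 k)) (D.stackAt τ z zd t 1 k)
      + (D.τu k - τ k t) * legendreForm (D.R2 k + Wb m n (D.W3 k)) (D.stackAt τ z zd t 2 k) ≤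
    (∫ s in (t - D.τl k)..t, derivState z zd s ⬝ᵥ D.R1 k *ᵥ derivState z zd s)
      + (∫ s in (t - D.τu k)..(t - D.τl k), derivState z zd s ⬝ᵥ D.R2 k *ᵥ derivState z zd s)
      + (z t ⬝ᵥ D.W1 k *ᵥ z t - z (t - D.τl k) ⬝ᵥ D.W1 k *ᵥ z (t - D.τl k))
      + (z (t - D.τl k) ⬝ᵥ D.W2 k *ᵥ z (t - D.τl k) - z (t - τ k t) ⬝ᵥ D.W2 k *ᵥ z (t - τ k t))
      + (z (t - τ k t) ⬝ᵥ D.W3 k *ᵥ z (t - τ k t)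
        - z (t - D.τu k) ⬝ᵥ D.W3 k *ᵥ z (t - D.τu k)) := by
  have hω : Continuous (derivState z zd) := continuous_derivState hz.continuous
    hz.continuous_velocity
  have recent := mul_legendreForm_legendreStack_le_integral hω N (hD.posSemidef_R1_add_W1 k)
    (hz.lower_nonneg k) (sub_add_cancel t (D.τl k))
  have middle := mul_legendreForm_legendreStack_le_integral hω N (hD.posSemidef_R2_add_W2 k)
    (sub_nonneg.2 (hz.lower_le k t)) (sub_add_sub_cancel t (τ k t) (D.τl k))
  have oldest := mul_legendreForm_legendreStack_le_integral hω N (hD.posSemidef_R2_add_W3 k)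
    (sub_nonneg.2 (hz.le_upper k t)) (sub_add_sub_cancel t (D.τu k) (τ k t))
  rw [integral_add_Wb_eq (hD.isSymm_W1 k) hz.hasDerivAt hz.continuous_velocity] at recent
  rw [integral_add_Wb_eq (hD.isSymm_W2 k) hz.hasDerivAt hz.continuous_velocity] at middle
  rw [integral_add_Wb_eq (hD.isSymm_W3 k) hz.hasDerivAt hz.continuous_velocity] at oldest
  have integrable (a b : ℝ) := (continuous_dotProduct_mulVec (D.R2 k) hω).intervalIntegrable
    (μ := MeasureTheory.volume) a b
  rw [← intervalIntegral.integral_add_adjacent_intervals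
    (integrable (t - D.τu k) (t - τ k t)) (integrable (t - τ k t) (t - D.τl k))]
  refine (add_le_add (add_le_add recent middle) oldest).trans_eq ?_
  ring

/-- The multipliers `Ȳ` cancel when every segment is tested with minus its own coefficients. -/
lemma agentLyapunovDeriv_le (hD : D.IsFeasible) (hz : D.IsErrorTrajectory τ z zd) (hN : 1 ≤ N)
    (k : Fin m) (t : ℝ) :
    D.agentLyapunovDeriv z zd k t ≤ D.stateForm (D.stateAt τ z t) k (τ k t)
      + D.τl k * segmentForm (D.R1 k + Wb m n (D.W1 k)) (D.stateAt τ z t ᵥ* Yb m n N D.Y 0 k)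
        (-D.stackAt τ z zd t 0 k)
      + (τ k t - D.τl k) * segmentForm (D.R2 k + Wb m n (D.W2 k))
        (D.stateAt τ z t ᵥ* Yb m n N D.Y 1 k) (-D.stackAt τ z zd t 1 k)
      + (D.τu k - τ k t) * segmentForm (D.R2 k + Wb m n (D.W3 k))
        (D.stateAt τ z t ᵥ* Yb m n N D.Y 2 k) (-D.stackAt τ z zd t 2 k) := by
  have segments := sum_mul_legendreForm_stackAt_le hD hz k t
  rw [hz.stateForm_stateAt hN, agentLyapunovDeriv, lyapunovDeriv]
  simp only [segmentForm_neg, add_mulVec, sub_mulVec, smul_mulVec, dotProduct_add, dotProduct_sub,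
    dotProduct_smul, smul_eq_mul] at segments ⊢
  linear_combination segments

lemma sub_mul_agentLyapunovDeriv_le (hD : D.IsFeasible) (hz : D.IsErrorTrajectory τ z zd)
    (hN : 1 ≤ N) (k : Fin m) (t : ℝ) :
    (D.τu k - D.τl k) * D.agentLyapunovDeriv z zd k t ≤
      (τ k t - D.τl k) * D.agentForm (D.stateAt τ z t) k (D.τu k)
        (-D.stackAt τ z zd t 0 k) (-D.stackAt τ z zd t 1 k)
      + (D.τu k - τ k t) * D.agentForm (D.stateAt τ z t) k (D.τl k)
        (-D.stackAt τ z zd t 0 k) (-D.stackAt τ z zd t 2 k) := by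
  rw [agentForm_vertex_combination]
  exact mul_le_mul_of_nonneg_left (agentLyapunovDeriv_le hD hz hN k t)
    (sub_nonneg.2 ((hz.lower_le k t).trans (hz.le_upper k t)))

/-- The delay vector of the vertex selected by `σ`. -/
def vertex (D : ConsensusData m n r N) (σ : Fin m → Bool) (k : Fin m) : ℝ :=
  bif σ k then D.τu k else D.τl k

lemma vertex_eq_or_eq (σ : Fin m → Bool) (k : Fin m) :
    D.vertex σ k = D.τl k ∨ D.vertex σ k = D.τu k := by
  cases h : σ k <;> simp [vertex, h]

lemma IsFeasible.lower_ne_upper [Nonempty (ag m n)] (hD : D.IsFeasible) (k : Fin m) :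
    D.τl k ≠ D.τu k := by
  intro h
  obtain ⟨p⟩ := ‹Nonempty (ag m n)›
  have diag_pos := (hD.posDef_neg_lmi D.τl fun _ => Or.inl rfl).diag_pos
    (i := Sum.inr (Sum.inr (k, 0, Sum.inl p)))
  simp [lmi, LMImat, RW23b, h] at diag_pos

lemma exists_vertex_agentLyapunovDeriv_le [Nonempty (ag m n)] (hD : D.IsFeasible)
    (hz : D.IsErrorTrajectory τ z zd) (hN : 1 ≤ N) (t : ℝ) :
    ∃ σ : Fin m → Bool, ∀ k, D.agentLyapunovDeriv z zd k t ≤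
      D.agentForm (D.stateAt τ z t) k (D.vertex σ k) (-D.stackAt τ z zd t 0 k)
        (-D.stackAt τ z zd t (bif σ k then 1 else 2) k) := by
  suffices h : ∀ k, ∃ b : Bool, D.agentLyapunovDeriv z zd k t ≤
      D.agentForm (D.stateAt τ z t) k (bif b then D.τu k else D.τl k) (-D.stackAt τ z zd t 0 k)
        (-D.stackAt τ z zd t (bif b then 1 else 2) k) from Classical.skolem.1 h
  intro k
  have lower_lt_upper : D.τl k < D.τu k :=
    lt_of_le_of_ne ((hz.lower_le k t).trans (hz.le_upper k t)) (hD.lower_ne_upper k)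
  have convex_bound := sub_mul_agentLyapunovDeriv_le hD hz hN k t
  rw [← sub_add_sub_cancel' (τ k t) (D.τl k) (D.τu k)] at convex_bound
  rcases le_or_le_of_add_mul_le (sub_nonneg.2 (hz.lower_le k t)) (sub_nonneg.2 (hz.le_upper k t))
    (by linarith) convex_bound with upper | lower
  · exact ⟨true, upper⟩
  · exact ⟨false, lower⟩

lemma exists_sum_agentForm_vertex_le (hD : D.IsFeasible) :
    ∃ c > 0, ∀ (σ : Fin m → Bool) (ζ : bg m n N → ℝ) (η₁ η₂ : Fin m → kp m n N → ℝ),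
      ∑ k, D.agentForm ζ k (D.vertex σ k) (η₁ k) (η₂ k) ≤ -(c * ‖ζ‖ ^ 2) := by
  choose c c_pos coercive using fun σ => exists_mul_norm_sq_le_of_posDef
    (hD.posDef_neg_lmi (D.vertex σ) (vertex_eq_or_eq σ))
  obtain ⟨σ₀, c_min⟩ := Finite.exists_min c
  refine ⟨c σ₀, c_pos σ₀, fun σ ζ η₁ η₂ => ?_⟩
  set ξ : bg m n N ⊕ ((Fin m × kp m n N) ⊕ (Fin m × kp m n N)) → ℝ :=
    Sum.elim ζ (Sum.elim (fun p => η₁ p.1 p.2) fun p => η₂ p.1 p.2) with hξ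
  have norm_le : ‖ζ‖ ≤ ‖ξ‖ :=
    (pi_norm_le_iff_of_nonneg (norm_nonneg _)).2 fun i => norm_le_pi_norm ξ (Sum.inl i)
  have form_le := coercive σ ξ
  rw [neg_mulVec, dotProduct_neg, hξ, dotProduct_lmi_mulVec, ← hξ] at form_le
  have c_le : c σ₀ * ‖ζ‖ ^ 2 ≤ c σ * ‖ξ‖ ^ 2 :=
    mul_le_mul (c_min σ) (pow_le_pow_left₀ (norm_nonneg _) norm_le 2) (sq_nonneg _) (c_pos σ).le
  linarith

lemma exists_sum_agentLyapunovDeriv_le [Nonempty (ag m n)] (hD : D.IsFeasible)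
    (hz : D.IsErrorTrajectory τ z zd) (hN : 1 ≤ N) :
    ∃ c > 0, ∀ t, ∑ k, D.agentLyapunovDeriv z zd k t ≤ -(c * ‖D.stateAt τ z t‖ ^ 2) := by
  obtain ⟨c, c_pos, form_le⟩ := exists_sum_agentForm_vertex_le hD
  refine ⟨c, c_pos, fun t => ?_⟩
  obtain ⟨σ, deriv_le⟩ := exists_vertex_agentLyapunovDeriv_le hD hz hN t
  exact (Finset.sum_le_sum fun k _ => deriv_le k).trans (form_le σ _ _ _)

lemma abs_apply_le_norm_stateAt (τ : Fin m → ℝ → ℝ) (z : ℝ → ag m n → ℝ) (t : ℝ) (p : ag m n) :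
    |z t p| ≤ ‖D.stateAt τ z t‖ := by
  have head : z t p = D.stateAt τ z t (Fin.castAdd _ 0, p) := by
    rw [stateAt, augmentedState, Fin.addCases_left]
  rw [head]
  exact norm_le_pi_norm (D.stateAt τ z t) _

end ConsensusData

lemma tendsto_zero_of_deriv_le_neg_mul_sq {V V' y y' ρ : ℝ → ℝ} {c C : ℝ} (hc : 0 < c)
    (hC : 0 ≤ C) (hV : ∀ t, HasDerivAt V (V' t) t) (hV0 : ∀ t, 0 ≤ V t)
    (hVρ : ∀ t, V' t ≤ -(c * ρ t ^ 2)) (hy : ∀ t, HasDerivAt y (y' t) t)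
    (hyρ : ∀ t, |y t| ≤ ρ t) (hyρ' : ∀ t, |y' t| ≤ C * ρ t) :
    Filter.Tendsto y Filter.atTop (nhds 0) := by
  have weaken {t b : ℝ} (hb : b ≤ (1 + 2 * C) * ρ t ^ 2) : V' t ≤ -(c / (1 + 2 * C) * b) := by
    refine (hVρ t).trans (neg_le_neg ?_)
    rw [div_mul_eq_mul_div, div_le_iff₀ (by positivity)]
    calc c * b ≤ c * ((1 + 2 * C) * ρ t ^ 2) := mul_le_mul_of_nonneg_left hb hc.le
      _ = c * ρ t ^ 2 * (1 + 2 * C) := by ring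
  have sq_tendsto : Filter.Tendsto (fun t => y t ^ 2) Filter.atTop (nhds 0) := by
    refine tendsto_zero_of_deriv_le (c := c / (1 + 2 * C)) (by positivity) hV
      (fun t => (hy t).pow 2) hV0 (fun t => sq_nonneg _) (fun t => weaken ?_) fun t => weaken ?_
    · have : y t ^ 2 ≤ ρ t ^ 2 := sq_le_sq.2 ((hyρ t).trans (le_abs_self _))
      nlinarith [mul_nonneg hC (sq_nonneg (ρ t))]
    · have : |y t| * |y' t| ≤ ρ t * (C * ρ t) := mul_le_mul (hyρ t) (hyρ' t) (abs_nonneg _)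
        ((abs_nonneg _).trans (hyρ t))
      simp only [Nat.cast_ofNat, Nat.add_one_sub_one, pow_one, abs_mul, Nat.abs_ofNat]
      nlinarith [sq_nonneg (ρ t)]
  have abs_tendsto := sq_tendsto.sqrt
  simp only [Real.sqrt_sq_eq_abs, Real.sqrt_zero] at abs_tendsto
  exact (tendsto_zero_iff_abs_tendsto_zero _).2 abs_tendsto

namespace ConsensusData

variable {m n r N : ℕ} {D : ConsensusData m n r N} {τ : Fin m → ℝ → ℝ} {z zd : ℝ → ag m n → ℝ}

lemma IsErrorTrajectory.abs_velocity_apply_le (hz : D.IsErrorTrajectory τ z zd) (t : ℝ)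
    (p : ag m n) :
    |zd t p| ≤ (∑ q, |dynRow m n r N D.A D.adj D.B D.K q p|) * ‖D.stateAt τ z t‖ := by
  rw [← hz.stateAt_vecMul_dynRow t, Finset.sum_mul]
  refine (Finset.abs_sum_le_sum_abs _ _).trans (Finset.sum_le_sum fun q _ => ?_)
  rw [abs_mul, mul_comm]
  exact mul_le_mul_of_nonneg_left (norm_le_pi_norm (D.stateAt τ z t) q) (abs_nonneg _)

theorem IsFeasible.tendsto_zero (hD : D.IsFeasible) (hz : D.IsErrorTrajectory τ z zd)
    (hN : 1 ≤ N) : Filter.Tendsto z Filter.atTop (nhds 0) := by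
  refine tendsto_pi_nhds.2 fun p => ?_
  have : Nonempty (ag m n) := ⟨p⟩
  obtain ⟨c, c_pos, deriv_le⟩ := exists_sum_agentLyapunovDeriv_le hD hz hN
  refine tendsto_zero_of_deriv_le_neg_mul_sq c_pos (Finset.sum_nonneg fun _ _ => abs_nonneg _)
    (V := fun t => ∑ k, D.agentLyapunov z zd k t) (fun t => HasDerivAt.fun_sum fun k _ => ?_)
    (fun t => Finset.sum_nonneg fun k _ => ?_) deriv_le
    (fun t => hasDerivAt_pi.1 (hz.hasDerivAt t) p)
    (fun t => abs_apply_le_norm_stateAt τ z t p) fun t => hz.abs_velocity_apply_le t p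
  · exact hasDerivAt_lyapunov hz.hasDerivAt hz.continuous_velocity
      (hD.posSemidef_P k).isHermitian _ _ _ _ _ _ t
  · exact lyapunov_nonneg (hD.posSemidef_P k) (hD.posSemidef_Q1 k) (hD.posSemidef_Q2 k)
      (hD.posSemidef_R1 k) (hD.posSemidef_R2 k) (hz.lower_nonneg k)
      ((hz.lower_le k t).trans (hz.le_upper k t)) z zd t

end ConsensusData

/-! ### The error dynamics of the multi-agent system -/

section ErrorDynamics

variable {m n r : ℕ}

lemma Um_mul_Gm_apply (l j : Fin m) :
    (Um m * Gm m) l j = (if j = l then 1 else 0) - if (j : ℕ) = 0 then 1 else 0 := by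
  obtain ⟨_ | l, hl⟩ := l
  · simp [mul_apply, Um, Fin.ext_iff]
  · have row (i : Fin (m - 1)) : Um m ⟨l + 1, hl⟩ i = if i = ⟨l, by lia⟩ then -1 else 0 := by
      simp [Um, Fin.ext_iff, eq_comm]
    simp only [mul_apply, row, ite_mul, neg_one_mul, zero_mul, Finset.sum_ite_eq',
      Finset.mem_univ, if_true]
    simp only [Gm, Fin.ext_iff]
    split_ifs <;> first | lia | norm_num

lemma sum_Lap_smul {E : Type*} [AddCommGroup E] [Module ℝ E] (adj : Fin m → Fin m → ℝ)
    (k : Fin m) (f : Fin m → E) :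
    ∑ l, Lap m adj k l • f l = ∑ l ∈ Finset.univ.erase k, adj k l • (f k - f l) := by
  have off_diagonal : ∑ l ∈ Finset.univ.erase k, Lap m adj k l • f l =
      ∑ l ∈ Finset.univ.erase k, -(adj k l • f l) := by
    refine Finset.sum_congr rfl fun l hl => ?_
    rw [Lap, if_neg (Finset.ne_of_mem_erase hl).symm, neg_smul]
  rw [← Finset.add_sum_erase _ _ (Finset.mem_univ k), off_diagonal, Lap, if_pos rfl,
    Finset.sum_smul, ← Finset.sum_add_distrib]
  exact Finset.sum_congr rfl fun l _ => by rw [smul_sub, sub_eq_add_neg]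

/-- `U G = 1 - 𝟙 e₁ᵀ`, and the Laplacian kills the constant vector `𝟙`. -/
lemma Lap_mul_Um_mul_Gm (adj : Fin m → Fin m → ℝ) : Lap m adj * Um m * Gm m = Lap m adj := by
  ext k j
  have row_sum : ∑ l, Lap m adj k l = 0 := by
    simpa using sum_Lap_smul adj k fun _ => (1 : ℝ)
  rw [Matrix.mul_assoc, mul_apply]
  simp only [Um_mul_Gm_apply, mul_sub, mul_ite, mul_one, mul_zero, Finset.sum_sub_distrib,
    Finset.sum_ite_eq, Finset.mem_univ, if_true]
  split_ifs <;> simp [row_sum]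

/-- The matrix whose columns are the states of the agents at time `t`; with it, Kronecker
products acting on stacked vectors become ordinary matrix products. -/
def agentMatrix (x : Fin m → ℝ → Fin n → ℝ) (t : ℝ) : Matrix (Fin n) (Fin m) ℝ :=
  of fun a k => x k t a

/-- The stacked error state `(G ⊗ I) x`. -/
noncomputable def errorState (x : Fin m → ℝ → Fin n → ℝ) (t : ℝ) : ag m n → ℝ :=
  vec (agentMatrix x t * (Gm m)ᵀ)

lemma errorState_apply (x : Fin m → ℝ → Fin n → ℝ) (t : ℝ) (p : ag m n) :
    errorState x t p = ∑ k, x k t p.2 * Gm m p.1 k := rfl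

lemma Gm_mul_Em_apply (k : Fin m) (i : Fin (m - 1)) (l : Fin m) :
    (Gm m * Em m k) i l = if l = k then Gm m i k else 0 := by
  by_cases h : l = k <;> simp [mul_apply, Em, h]

lemma Abar_mulVec_errorState_apply (A : Matrix (Fin n) (Fin n) ℝ) (x : Fin m → ℝ → Fin n → ℝ)
    (t : ℝ) (p : ag m n) :
    (Abar m n A *ᵥ errorState x t) p = ∑ k, (A *ᵥ x k t) p.2 * Gm m p.1 k := by
  rw [Abar, errorState, kronecker_mulVec_vec, transpose_one, Matrix.mul_one, ← Matrix.mul_assoc]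
  rfl

lemma agentMatrix_mul_Lap_transpose (adj : Fin m → Fin m → ℝ) (x : Fin m → ℝ → Fin n → ℝ)
    (t : ℝ) (k : Fin m) :
    (agentMatrix x t * (Lap m adj)ᵀ).col k =
      ∑ l ∈ Finset.univ.erase k, adj k l • (x k t - x l t) := by
  rw [← sum_Lap_smul adj k fun l => x l t]
  ext a
  simp [agentMatrix, mul_apply, mul_comm]

lemma mulVec_uCtrl (B : Matrix (Fin n) (Fin r) ℝ) (K : Matrix (Fin r) (Fin n) ℝ)
    (adj : Fin m → Fin m → ℝ) (x : Fin m → ℝ → Fin n → ℝ) (k : Fin m) (t : ℝ) :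
    B *ᵥ uCtrl m n r K adj x k t = -(B * K * (agentMatrix x t * (Lap m adj)ᵀ)).col k := by
  have control : uCtrl m n r K adj x k t = -(K *ᵥ (agentMatrix x t * (Lap m adj)ᵀ).col k) := by
    rw [agentMatrix_mul_Lap_transpose, uCtrl, mulVec_sum]
    simp only [mulVec_smul]
  rw [control, mulVec_neg, mulVec_mulVec]
  rfl

lemma Bbar_mulVec_errorState_apply (adj : Fin m → Fin m → ℝ) (B : Matrix (Fin n) (Fin r) ℝ)
    (K : Matrix (Fin r) (Fin n) ℝ) (k : Fin m) (x : Fin m → ℝ → Fin n → ℝ) (t : ℝ)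
    (p : ag m n) :
    (Bbar m n r adj B K k *ᵥ errorState x t) p =
      -((B *ᵥ uCtrl m n r K adj x k t) p.2 * Gm m p.1 k) := by
  have eliminate_error : Bbar m n r adj B K k *ᵥ errorState x t =
      vec (B * K * (agentMatrix x t * (Lap m adj)ᵀ) * (Gm m * Em m k)ᵀ) := by
    rw [Bbar, errorState, kronecker_mulVec_vec]
    nth_rw 2 [← Lap_mul_Um_mul_Gm adj]
    simp only [transpose_mul, Matrix.mul_assoc]
  rw [eliminate_error, vec, mul_apply, mulVec_uCtrl]
  simp [Gm_mul_Em_apply]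

lemma hasDerivAt_errorState {A : Matrix (Fin n) (Fin n) ℝ} {B : Matrix (Fin n) (Fin r) ℝ}
    {K : Matrix (Fin r) (Fin n) ℝ} {adj : Fin m → Fin m → ℝ} {x : Fin m → ℝ → Fin n → ℝ}
    {δ : Fin m → ℝ} {t : ℝ} (hx : ∀ k, HasDerivAt (x k)
      (A *ᵥ x k t + B *ᵥ uCtrl m n r K adj x k (t - δ k)) t) :
    HasDerivAt (errorState x) (Abar m n A *ᵥ errorState x t -
      ∑ k, Bbar m n r adj B K k *ᵥ errorState x (t - δ k)) t := by
  refine hasDerivAt_pi.2 fun p => ?_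
  simp only [errorState_apply]
  refine (HasDerivAt.fun_sum fun k _ =>
    (hasDerivAt_pi.1 (hx k) p.2).mul_const (Gm m p.1 k)).congr_deriv ?_
  simp only [Pi.add_apply, add_mul, Finset.sum_add_distrib, Pi.sub_apply, Finset.sum_apply,
    Abar_mulVec_errorState_apply, Bbar_mulVec_errorState_apply, Finset.sum_neg_distrib,
    sub_neg_eq_add]

lemma sub_apply_eq_sum_errorState (x : Fin m → ℝ → Fin n → ℝ) (i j : Fin m) (t : ℝ) (a : Fin n) :
    x i t a - x j t a = ∑ q, (Um m i q - Um m j q) * errorState x t (q, a) := by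
  have from_root (l : Fin m) : ∑ q, Um m l q * errorState x t (q, a) =
      x l t a - ∑ k, x k t a * if (k : ℕ) = 0 then 1 else 0 := by
    calc ∑ q, Um m l q * errorState x t (q, a) = ∑ k, x k t a * (Um m * Gm m) l k := by
          simp only [errorState_apply, mul_apply, Finset.mul_sum]
          rw [Finset.sum_comm]
          exact Finset.sum_congr rfl fun _ _ => Finset.sum_congr rfl fun _ _ => by ring
      _ = _ := by
          simp [Um_mul_Gm_apply, mul_sub]
  simp only [sub_mul, Finset.sum_sub_distrib, from_root, sub_sub_sub_cancel_right]

lemma tendsto_sub_of_tendsto_errorState {x : Fin m → ℝ → Fin n → ℝ} {l : Filter ℝ}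
    (h : Filter.Tendsto (errorState x) l (nhds 0)) (i j : Fin m) :
    Filter.Tendsto (fun t => x i t - x j t) l (nhds 0) := by
  refine tendsto_pi_nhds.2 fun a => ?_
  simp only [Pi.sub_apply, sub_apply_eq_sum_errorState, Pi.zero_apply]
  have := tendsto_finsetSum Finset.univ fun q _ =>
    (tendsto_pi_nhds.1 h (q, a)).const_mul (Um m i q - Um m j q)
  simpa using this

end ErrorDynamics

theorem theorem1_consensus_general {m n r N : ℕ} {D : ConsensusData m n r N}
    {τ : Fin m → ℝ → ℝ} {x : Fin m → ℝ → Fin n → ℝ} (hN : 1 ≤ N) (hD : D.IsFeasible)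
    (hτcont : ∀ k, Continuous (τ k))
    (hτbound : ∀ k t, 0 ≤ D.τl k ∧ D.τl k ≤ τ k t ∧ τ k t ≤ D.τu k)
    (hdyn : ∀ k t, HasDerivAt (x k)
      (D.A *ᵥ x k t + D.B *ᵥ uCtrl m n r D.K D.adj x k (t - τ k t)) t) (i j : Fin m) :
    Filter.Tendsto (fun t => x i t - x j t) Filter.atTop (nhds 0) := by
  have hasDerivAt (t : ℝ) := hasDerivAt_errorState fun k => hdyn k t
  have continuous_error : Continuous (errorState x) :=
    continuous_iff_continuousAt.2 fun t => (hasDerivAt t).continuousAt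
  have trajectory : D.IsErrorTrajectory τ (errorState x) _ :=
    { lower_nonneg := fun k => (hτbound k 0).1
      lower_le := fun k t => (hτbound k t).2.1
      le_upper := fun k t => (hτbound k t).2.2
      hasDerivAt := hasDerivAt
      continuous_velocity := (continuous_const.matrix_mulVec continuous_error).sub
        (continuous_finsetSum _ fun k _ => continuous_const.matrix_mulVec
          (continuous_error.comp (continuous_id.sub (hτcont k))))
      velocity_eq := fun _ => rfl }
  exact tendsto_sub_of_tendsto_errorState (hD.tendsto_zero trajectory hN) i j

/-- **Theorem 1** (individual-delay-reflected consensus criterion): if for each agent `k`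
there exist `P_k ≻ 0`, `Q_{1k}, Q_{2k} ≻ 0`, `R_{1k}, R_{2k} ≻ 0`, symmetric
`W_{1k}, W_{2k}, W_{3k}` and free matrices `Y_{ikj}` such that
`R_{1k}+W̄_{1k} ≻ 0`, `R_{2k}+W̄_{2k} ≻ 0`, `R_{2k}+W̄_{3k} ≻ 0` and the LMI block matrix
is negative definite at all `2^m` vertices of the delay box, then the delayed multi-agent
system achieves consensus: `x_i(t) − x_j(t) → 0` as `t → ∞` for all agents `i, j`. -/
theorem theorem1_consensus (m n r N : ℕ) (hm : 2 ≤ m) (hn : 1 ≤ n) (hN : 1 ≤ N)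
    (A : Matrix (Fin n) (Fin n) ℝ) (B : Matrix (Fin n) (Fin r) ℝ)
    (K : Matrix (Fin r) (Fin n) ℝ) (adj : Fin m → Fin m → ℝ)
    (τl τu : Fin m → ℝ) (τ : Fin m → ℝ → ℝ)
    (hτcont : ∀ k, Continuous (τ k))
    (hτbound : ∀ k t, 0 ≤ τl k ∧ τl k ≤ τ k t ∧ τ k t ≤ τu k)
    (x : Fin m → ℝ → Fin n → ℝ)
    (hdyn : ∀ (k : Fin m) (t : ℝ), HasDerivAt (x k)
      (A.mulVec (x k t) + B.mulVec (uCtrl m n r K adj x k (t - τ k t))) t)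
    (P : Fin m → Matrix (Fin 3 × ag m n) (Fin 3 × ag m n) ℝ)
    (Q1 Q2 : Fin m → Matrix (ag m n) (ag m n) ℝ)
    (R1 R2 : Fin m → Matrix (ag m n ⊕ ag m n) (ag m n ⊕ ag m n) ℝ)
    (W1 W2 W3 : Fin m → Matrix (ag m n) (ag m n) ℝ)
    (Y : Fin 3 → Fin m → Fin (2 * N + 1) → Matrix (bg m n N) (ag m n) ℝ)
    (hP : ∀ k, (P k).PosDef) (hQ1 : ∀ k, (Q1 k).PosDef) (hQ2 : ∀ k, (Q2 k).PosDef)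
    (hR1 : ∀ k, (R1 k).PosDef) (hR2 : ∀ k, (R2 k).PosDef)
    (hW1 : ∀ k, (W1 k).IsSymm) (hW2 : ∀ k, (W2 k).IsSymm) (hW3 : ∀ k, (W3 k).IsSymm)
    (hRW1 : ∀ k, (R1 k + Wb m n (W1 k)).PosDef)
    (hRW2 : ∀ k, (R2 k + Wb m n (W2 k)).PosDef)
    (hRW3 : ∀ k, (R2 k + Wb m n (W3 k)).PosDef)
    (hLMI : ∀ τv : Fin m → ℝ, (∀ k, τv k = τl k ∨ τv k = τu k) →
      (-(LMImat m n r N A adj B K τl τu τv P Q1 Q2 R1 R2 W1 W2 W3 Y)).PosDef) :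
    ∀ i j : Fin m,
      Filter.Tendsto (fun t => x i t - x j t) Filter.atTop (nhds (0 : Fin n → ℝ)) :=
  theorem1_consensus_general (D := ⟨A, adj, B, K, τl, τu, P, Q1, Q2, R1, R2, W1, W2, W3, Y⟩) hN
    { posSemidef_P := fun k => (hP k).posSemidef
      posSemidef_Q1 := fun k => (hQ1 k).posSemidef
      posSemidef_Q2 := fun k => (hQ2 k).posSemidef
      posSemidef_R1 := fun k => (hR1 k).posSemidef
      posSemidef_R2 := fun k => (hR2 k).posSemidef
      isSymm_W1 := hW1
      isSymm_W2 := hW2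
      isSymm_W3 := hW3
      posSemidef_R1_add_W1 := fun k => (hRW1 k).posSemidef
      posSemidef_R2_add_W2 := fun k => (hRW2 k).posSemidef
      posSemidef_R2_add_W3 := fun k => (hRW3 k).posSemidef
      posDef_neg_lmi := hLMI }
    hτcont hτbound hdyn
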